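/- Let H and K be finitely generated subgroups of F(A) with H a free factor of K. Then there exist a basis C of H and a set D ⊆ K disjoint from C such that C ∪ D is a basis of K and every element of D has length (as a reduced word over Ã) at most max(2·diam_{q₀}(Γ_A(H)), 1 + 2·diam_{q₀}(Γ_A(K))). -/

import Mathlib

open Function

/-- A letter of the symmetrized alphabet Ã: `(a, true)` stands for `a ∈ A` and
`(a, false)` for `a⁻¹ ∈ A⁻¹`. -/
abbrev Ltr (A : Type) := A × Bool

/-- Inversion of letters of Ã. -/
def Ltr.inv {A : Type} (x : Ltr A) : Ltr A := (x.1, !x.2)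

/-- The inverse `u⁻¹` of a word `u` over Ã. -/
def wordInv {A : Type} (w : List (Ltr A)) : List (Ltr A) := (w.map Ltr.inv).reverse

/-- A word over Ã is reduced iff it has no factor of the form `a a⁻¹` or `a⁻¹ a`. -/
def IsReducedWord {A : Type} (w : List (Ltr A)) : Prop :=
  ∀ (u v : List (Ltr A)) (a : A) (b : Bool), w ≠ u ++ (a, b) :: (a, !b) :: v

/-- An automaton over the symmetrized alphabet Ã, with a bundled state type `Q`,
an initial state `q0` and a set `E` of transitions. -/
structure Autom (A : Type) : Type 1 where
  Q : Type
  q0 : Q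
  E : Set (Q × Ltr A × Q)

namespace Autom

variable {A : Type}

/-- Paths using only transitions in the set `T`. -/
inductive PathOn (M : Autom A) (T : Set (M.Q × Ltr A × M.Q)) :
    M.Q → List (Ltr A) → M.Q → Prop
  | nil (q : M.Q) : PathOn M T q [] q
  | cons {p q r : M.Q} {a : Ltr A} {w : List (Ltr A)} :
      (p, a, q) ∈ T → PathOn M T q w r → PathOn M T p (a :: w) r

/-- `M.Path p u q` : the word `u` labels a path from state `p` to state `q` in `M`. -/
def Path (M : Autom A) : M.Q → List (Ltr A) → M.Q → Prop := M.PathOn M.E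

/-- The language L(𝒜) of words labeling a path from `q0` to `q0`. -/
def lang (M : Autom A) : Set (List (Ltr A)) := {w | M.Path M.q0 w M.q0}

/-- The set L(𝒜)ρ of reductions (in the free group `F(A)`) of words of L(𝒜). -/
def langRho (M : Autom A) : Set (FreeGroup A) := FreeGroup.mk '' M.lang

/-- Dual automaton: `(p,a,q)` is an edge iff `(q,a⁻¹,p)` is one. -/
def Dual (M : Autom A) : Prop := ∀ p a q, (p, a, q) ∈ M.E ↔ (q, Ltr.inv a, p) ∈ M.E

/-- Deterministic automaton. -/
def Deterministic (M : Autom A) : Prop :=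
  ∀ p a q q', (p, a, q) ∈ M.E → (p, a, q') ∈ M.E → q = q'

/-- Trim automaton: every state lies on a path from `q0` to `q0`. -/
def Trim (M : Autom A) : Prop := ∀ q, ∃ u v, M.Path M.q0 u q ∧ M.Path q v M.q0

/-- Inverse automaton: deterministic, trim and dual. -/
def IsInv (M : Autom A) : Prop := M.Deterministic ∧ M.Trim ∧ M.Dual

/-- Reduced automaton: every state lies on a path from `q0` to `q0` labeled by
a reduced word. -/
def IsRed (M : Autom A) : Prop :=
  ∀ q, ∃ u v, IsReducedWord (u ++ v) ∧ M.Path M.q0 u q ∧ M.Path q v M.q0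

/-- Homomorphisms of automata. -/
def IsHom (M N : Autom A) (φ : M.Q → N.Q) : Prop :=
  φ M.q0 = N.q0 ∧ ∀ p a q, (p, a, q) ∈ M.E → (φ p, a, φ q) ∈ N.E

/-- Isomorphism of automata. -/
def Isomorphic (M N : Autom A) : Prop :=
  ∃ φ : M.Q ≃ N.Q, M.IsHom N φ ∧ N.IsHom M φ.symm

/-- `N` is (isomorphic to) the automaton obtained from `M` by identifying the two
states `p` and `q`. -/
def IsIdentification (M : Autom A) (p q : M.Q) (N : Autom A) : Prop :=
  ∃ φ : M.Q → N.Q,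
    Surjective φ ∧ φ M.q0 = N.q0 ∧
    (∀ x y, φ x = φ y ↔ x = y ∨ (x = p ∧ y = q) ∨ (x = q ∧ y = p)) ∧
    (∀ e : N.Q × Ltr A × N.Q, e ∈ N.E ↔ ∃ e' ∈ M.E, e = (φ e'.1, e'.2.1, φ e'.2.2))

/-- `N` is (isomorphic to) the automaton obtained from `M` by deleting the state `q`
and all transitions involving it. -/
def IsDeletion (M : Autom A) (q : M.Q) (N : Autom A) : Prop :=
  ∃ φ : N.Q → M.Q,
    Injective φ ∧ Set.range φ = {x | x ≠ q} ∧ φ N.q0 = M.q0 ∧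
    (∀ e : N.Q × Ltr A × N.Q, e ∈ N.E ↔ (φ e.1, e.2.1, φ e.2.2) ∈ M.E)

/-- Elementary reduction of type 1. -/
def Red1 (M N : Autom A) : Prop :=
  ∃ p q r a, p ≠ q ∧ (r, a, p) ∈ M.E ∧ (r, a, q) ∈ M.E ∧ M.IsIdentification p q N

/-- Elementary reduction of type 2. -/
def Red2 (M N : Autom A) : Prop :=
  ∃ (p q : M.Q) (a : Ltr A), q ≠ M.q0 ∧ (p, a, q) ∈ M.E ∧ (q, Ltr.inv a, p) ∈ M.E ∧
    (∀ e ∈ M.E, e.1 = q ∨ e.2.2 = q → e = (p, a, q) ∨ e = (q, Ltr.inv a, p)) ∧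
    M.IsDeletion q N

/-- `N` is (isomorphic to) the reduction `Mρ` of `M`: perform elementary reductions
of type 1 until the automaton is deterministic, then elementary reductions of type 2
until none is possible. -/
def ReductionOf (M N : Autom A) : Prop :=
  ∃ M₁, Relation.ReflTransGen Red1 M M₁ ∧ M₁.Deterministic ∧
    Relation.ReflTransGen Red2 M₁ N ∧ ∀ N', ¬ Red2 N N'

/-- `N` is (isomorphic to) the expansion of `M` by `(p, w, q)`: a new path labeled `w`
from `p` to `q` (together with its inverse path) whose intermediate states are new. -/
def IsExpansion (M : Autom A) (p : M.Q) (w : List (Ltr A)) (q : M.Q) (N : Autom A) : Prop :=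
  w ≠ [] ∧
  ∃ (φ : M.Q → N.Q) (c : Fin (w.length + 1) → N.Q),
    Injective φ ∧ φ M.q0 = N.q0 ∧ c 0 = φ p ∧ c (Fin.last w.length) = φ q ∧
    (∀ i : Fin (w.length + 1), 0 < (i : ℕ) → (i : ℕ) < w.length → c i ∉ Set.range φ) ∧
    (∀ i j : Fin (w.length + 1), 0 < (i : ℕ) → (i : ℕ) < w.length → c i = c j → i = j) ∧
    (∀ x : N.Q, (∃ y, φ y = x) ∨ ∃ i, c i = x) ∧
    (∀ e : N.Q × Ltr A × N.Q, e ∈ N.E ↔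
      ((∃ e' ∈ M.E, e = (φ e'.1, e'.2.1, φ e'.2.2)) ∨
        ∃ i : Fin w.length,
          e = (c i.castSucc, w.get i, c i.succ) ∨
          e = (c i.succ, Ltr.inv (w.get i), c i.castSucc)))

/-- `M →exp^{(p,w,q)} N` : `N` is (isomorphic to) the reduction of the expansion
of `M` by `(p,w,q)`. -/
def ExpStep (M : Autom A) (p : M.Q) (w : List (Ltr A)) (q : M.Q) (N : Autom A) : Prop :=
  ∃ N' N'', M.IsExpansion p w q N' ∧ ReductionOf N' N'' ∧ Isomorphic N'' N

/-- `M →re^{(p,w,q)} N` : a reduced expansion, i.e. an expansion-then-reduction in which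
`M` embeds in `N`. -/
def REStep (M : Autom A) (p : M.Q) (w : List (Ltr A)) (q : M.Q) (N : Autom A) : Prop :=
  M.ExpStep p w q N ∧ ∃ ψ : M.Q → N.Q, Injective ψ ∧ M.IsHom N ψ

/-- `M →e^{w} N` : an e-step, i.e. `M →exp^{(q0,w,q0)} N`. -/
def EStep (M : Autom A) (w : List (Ltr A)) (N : Autom A) : Prop :=
  M.ExpStep M.q0 w M.q0 N

/-- `M →i^{p=q} N` : an i-step; `N` is (isomorphic to) the reduction of the automaton
obtained from `M` by identifying the distinct states `p` and `q`. -/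
def IStep (M : Autom A) (p q : M.Q) (N : Autom A) : Prop :=
  p ≠ q ∧ ∃ N' N'', M.IsIdentification p q N' ∧ ReductionOf N' N'' ∧ Isomorphic N'' N

/-- i-step, allowing `p = q` (in which case nothing happens). -/
def IStep' (M : Autom A) (p q : M.Q) (N : Autom A) : Prop :=
  (p = q ∧ M.Isomorphic N) ∨ M.IStep p q N

/-- `M →i N` : some i-step applies. -/
def IStepAny (M N : Autom A) : Prop := ∃ p q, M.IStep p q N

/-- Some reduced expansion (by a nonempty reduced word) applies. -/
def REStepAny (M N : Autom A) : Prop :=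
  ∃ p w q, IsReducedWord w ∧ M.REStep p w q N

/-- `M` is (isomorphic to) `Γ_A(H)` : a reduced inverse automaton with `L(M)ρ = H`. -/
def Represents (M : Autom A) (H : Subgroup (FreeGroup A)) : Prop :=
  M.IsInv ∧ M.IsRed ∧ M.langRho = ↑H

/-- The `q0`-diameter of an automaton: the maximum over all states `q` of the minimal
length of a reduced word labeling a path from `q0` to `q`. -/
noncomputable def diam (M : Autom A) : ℕ :=
  ⨆ q : M.Q, sInf {n | ∃ u, IsReducedWord u ∧ u.length = n ∧ M.Path M.q0 u q}

end Autom

/-- `S` is a basis of the subgroup `H`: `S` generates `H` and freely so. -/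
def IsFreeBasis {G : Type} [Group G] (S : Set G) (H : Subgroup G) : Prop :=
  Subgroup.closure S = H ∧
    Injective (FreeGroup.lift (Subtype.val : S → G) : FreeGroup S →* G)

/-- `H ≤ff K` : `H` is a free factor of `K`. -/
def FreeFactor {G : Type} [Group G] (H K : Subgroup G) : Prop :=
  ∃ B C : Set G, IsFreeBasis B H ∧ IsFreeBasis C K ∧ B ⊆ C

/-- The rank of a subgroup: the cardinality of a basis (the common value of
the cardinalities of all bases, when `H` is a finite-rank free group). -/
noncomputable def rk {G : Type} [Group G] (H : Subgroup G) : ℕ :=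
  sInf {n | ∃ S : Set G, IsFreeBasis S H ∧ S.ncard = n}

/-- `L` is a graphical free factor of `K` with respect to `A`: `Γ_A(L)` embeds
in `Γ_A(K)`. -/
def GraphicalFF {A : Type} (L K : Subgroup (FreeGroup A)) : Prop :=
  L ≤ K ∧ ∃ ML MK : Autom A, ML.Represents L ∧ MK.Represents K ∧
    ∃ ψ : ML.Q → MK.Q, Injective ψ ∧ ML.IsHom MK ψ

/-- A step (i-step or reduced expansion) from `M` to `N` of cost `c`. -/
def StepCost {A : Type} (M N : Autom A) (c : ℕ) : Prop :=
  (c = 0 ∧ Autom.IStepAny M N) ∨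
  (∃ p w q, IsReducedWord w ∧ w.length = c ∧ M.REStep p w q N)

/-- The well-order `≺` on cost sequences. -/
def costLT (k l : List ℕ) : Prop :=
  k.length < l.length ∨
  (k.length = l.length ∧ k.sum < l.sum) ∨
  (k.length = l.length ∧ k.sum = l.sum ∧ List.Lex (· < ·) k l)

/-!
The automaton `Γ_A(G)` is the quotient by `G` of the convex hull of `G` in the Cayley tree of
`F(A)`, so that everything can be measured in the tree. Adjoin the elements of a complement of `H`
one after the other, and attach to each of them the distance between the hull of the current
subgroup `G` and its translate by the new element `x`.

If this distance is positive, then `Γ_A(G)` embeds in `Γ_A(⟨G, x⟩)`. If it is `0`, then `x` may be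
multiplied on both sides by elements of `G` so as to become a path to some vertex of `Γ_A(G)`
followed by a path back from another one, and the radius of `Γ_A(⟨G, x⟩)` is at most that of
`Γ_A(G)`. When an adjunction at positive distance is followed by one at distance `0`, the two
generators can be exchanged for a pair of smaller weight. In a chain of minimal weight, the
adjunctions at distance `0` therefore come first; their generators may be taken of length at most
`2 diam Γ_A(H)`, and they lead to a subgroup `L` such that `Γ_A(L)` embeds in `Γ_A(K)`.

Contracting a spanning tree of `Γ_A(K)` then turns `Γ_A(L)` into an automaton over the Schreier
generators of `K` whose edges have distinct labels. Hence `L` has a complement in `K` which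
consists of Schreier generators, and these have length at most `1 + 2 diam Γ_A(K)`.
-/

section FreeComplements

variable {G W : Type} [Group G] [Group W] {H K L : Subgroup G} {B D S : Set G} {x y : G}

theorem hom_eq_of_eqOn_generators {φ : K →* W} {ψ : L →* W} (hS : Subgroup.closure S = L)
    (hLK : L ≤ K) (h : ∀ s (hK : s ∈ K) (hL : s ∈ L), s ∈ S → φ ⟨s, hK⟩ = ψ ⟨s, hL⟩) :
    φ.comp (Subgroup.inclusion hLK) = ψ := by
  subst hS
  refine MonoidHom.eq_of_eqOn_dense Subgroup.closure_closure_coe_preimage ?_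
  rintro ⟨s, hs⟩ hsS
  exact h s _ hs hsS

namespace IsFreeBasis

theorem subset (h : IsFreeBasis S K) : S ⊆ K :=
  h.1 ▸ Subgroup.subset_closure

theorem exists_hom (h : IsFreeBasis S K) (f : G → W) :
    ∃ φ : K →* W, ∀ s (hs : s ∈ K), s ∈ S → φ ⟨s, hs⟩ = f s := by
  have hrange : (FreeGroup.lift ((↑) : S → G)).range = K := by
    rw [FreeGroup.range_lift_eq_closure, Subtype.range_coe, h.1]
  subst hrange
  let e := MonoidHom.ofInjective h.2
  refine ⟨(FreeGroup.lift fun s : S ↦ f s).comp e.symm.toMonoidHom, fun s hs hsS ↦ ?_⟩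
  have he : e.symm ⟨s, hs⟩ = FreeGroup.of ⟨s, hsS⟩ :=
    e.symm_apply_eq.2 (Subtype.ext (FreeGroup.lift_apply_of (β := G)).symm)
  simp [he]

theorem of_exists_hom (hS : Subgroup.closure S = K) (φ : K →* FreeGroup S)
    (hφ : ∀ s : S, ∀ hs, φ ⟨s, hs⟩ = FreeGroup.of s) : IsFreeBasis S K := by
  subst hS
  let j : FreeGroup S →* Subgroup.closure S :=
    FreeGroup.lift fun s ↦ ⟨s, Subgroup.subset_closure s.2⟩
  have hj : (Subgroup.closure S).subtype.comp j = FreeGroup.lift ((↑) : S → G) := by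
    ext s; simp [j]
  have hφj : φ.comp j = MonoidHom.id _ := by
    ext s; simp [j, hφ]
  refine ⟨rfl, ?_⟩
  rw [← hj]
  exact (Subgroup.subtype_injective _).comp
    (LeftInverse.injective fun w ↦ DFunLike.congr_fun hφj w)

end IsFreeBasis

/-- `D` is a complement of `H` in `K`: `K` is the free product of `H` and of a free group with
basis `D`. Freeness is encoded by the universal property, tested on the groups in `Type`; the
prescribed values on `D` are given by a function on all of `G`, whose other values are
irrelevant. -/
def IsFreeComplement (D : Set G) (H K : Subgroup G) : Prop :=
  H ⊔ Subgroup.closure D = K ∧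
    ∀ (W : Type) [Group W] (f : H →* W) (w : G → W), ∃ φ : K →* W,
      (∀ g (hH : g ∈ H) (hK : g ∈ K), φ ⟨g, hK⟩ = f ⟨g, hH⟩) ∧
      ∀ d (hK : d ∈ K), d ∈ D → φ ⟨d, hK⟩ = w d

namespace IsFreeComplement

theorem le (h : IsFreeComplement D H K) : H ≤ K :=
  h.1 ▸ le_sup_left

theorem subset (h : IsFreeComplement D H K) : D ⊆ K :=
  h.1 ▸ Subgroup.subset_closure.trans (SetLike.coe_subset_coe.2 le_sup_right)

theorem notMem (h : IsFreeComplement D H K) (hx : x ∈ D) : x ∉ H := by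
  intro hxH
  obtain ⟨φ, hφH, hφD⟩ := h.2 (Multiplicative ℤ) 1 fun _ ↦ Multiplicative.ofAdd 1
  have hφx := hφD x (h.subset hx) hx
  rw [hφH x hxH, MonoidHom.one_apply] at hφx
  exact absurd hφx (by decide)

theorem isFreeBasis_union (h : IsFreeComplement D H K) (hB : IsFreeBasis B H) :
    IsFreeBasis (B ∪ D) K ∧ Disjoint B D := by
  classical
  refine ⟨?_, Set.disjoint_right.2 fun x hxD hxB ↦ h.notMem hxD (hB.subset hxB)⟩
  let f : G → FreeGroup ↥(B ∪ D) := fun g ↦ if hg : g ∈ B ∪ D then FreeGroup.of ⟨g, hg⟩ else 1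
  obtain ⟨φ, hφ⟩ := hB.exists_hom f
  obtain ⟨ψ, hψH, hψD⟩ := h.2 _ φ f
  refine .of_exists_hom (by rw [Subgroup.closure_union, hB.1, h.1]) ψ ?_
  rintro ⟨s, hsB | hsD⟩ hs
  · rw [hψH s (hB.subset hsB), hφ _ _ hsB]
    exact dif_pos (Or.inl hsB)
  · rw [hψD s _ hsD]
    exact dif_pos (Or.inr hsD)

theorem empty (H : Subgroup G) : IsFreeComplement ∅ H H :=
  ⟨by simp, fun _ _ f _ ↦ ⟨f, fun _ _ _ ↦ rfl, fun _ _ h ↦ h.elim⟩⟩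

theorem mono (h : IsFreeComplement D H K) (hBD : B ⊆ D) (hB : H ⊔ Subgroup.closure B = K) :
    IsFreeComplement B H K := by
  refine ⟨hB, fun W _ f w ↦ ?_⟩
  obtain ⟨φ, hφH, hφD⟩ := h.2 W f w
  exact ⟨φ, hφH, fun d hd hdB ↦ hφD d hd (hBD hdB)⟩

theorem trans (hB : IsFreeComplement B H L) (hD : IsFreeComplement D L K) :
    IsFreeComplement (B ∪ D) H K := by
  refine ⟨by rw [Subgroup.closure_union, ← sup_assoc, hB.1, hD.1], fun W _ f w ↦ ?_⟩
  obtain ⟨φ, hφH, hφB⟩ := hB.2 W f w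
  obtain ⟨ψ, hψL, hψD⟩ := hD.2 W φ w
  refine ⟨ψ, fun g hH hK ↦ (hψL g (hB.le hH) hK).trans (hφH g hH _), ?_⟩
  rintro d hK (hd | hd)
  exacts [(hψL d (hB.subset hd) hK).trans (hφB d _ hd), hψD d hK hd]

theorem left_of_union (h : IsFreeComplement (B ∪ D) H K) :
    IsFreeComplement B H (H ⊔ Subgroup.closure B) := by
  have hle : H ⊔ Subgroup.closure B ≤ K := by
    rw [← h.1]; gcongr; exact Set.subset_union_left
  refine ⟨rfl, fun W _ f w ↦ ?_⟩
  obtain ⟨φ, hφH, hφD⟩ := h.2 W f w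
  exact ⟨φ.comp (Subgroup.inclusion hle), fun g hH _ ↦ hφH g hH _,
    fun d _ hd ↦ hφD d _ (Or.inl hd)⟩

theorem right_of_union (h : IsFreeComplement (B ∪ D) H K) (hBD : Disjoint B D) :
    IsFreeComplement D (H ⊔ Subgroup.closure B) K := by
  classical
  have hK : H ⊔ Subgroup.closure B ⊔ Subgroup.closure D = K := by
    rw [sup_assoc, ← Subgroup.closure_union, h.1]
  have hle : H ⊔ Subgroup.closure B ≤ K := hK ▸ le_sup_left
  refine ⟨hK, fun W _ f w ↦ ?_⟩
  let v : G → W := fun g ↦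
    if hg : g ∈ B then f ⟨g, Subgroup.mem_sup_right (Subgroup.subset_closure hg)⟩ else w g
  obtain ⟨φ, hφH, hφD⟩ := h.2 W (f.comp (Subgroup.inclusion le_sup_left)) v
  refine ⟨φ, fun g hg _ ↦ ?_, fun d hd hdD ↦ ?_⟩
  · refine DFunLike.congr_fun (hom_eq_of_eqOn_generators (S := H ∪ B) (φ := φ) (ψ := f)
      (by rw [Subgroup.closure_union, Subgroup.closure_eq]) hle ?_) (⟨g, hg⟩ : ↥(_ : Subgroup G))
    rintro s hsK hsL (hs | hs)
    · exact hφH s hs hsK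
    · rw [hφD s hsK (Or.inl hs)]
      exact dif_pos hs
  · rw [hφD d hd (Or.inr hdD)]
    exact dif_neg fun hdB ↦ Set.disjoint_left.1 hBD hdB hdD

theorem map {F : Type} [Group F] (h : IsFreeComplement D H K) {e : G →* F} (he : Injective e) :
    IsFreeComplement (e '' D) (H.map e) (K.map e) := by
  refine ⟨by rw [← MonoidHom.map_closure, ← Subgroup.map_sup, h.1], fun W _ f w ↦ ?_⟩
  obtain ⟨φ, hφH, hφD⟩ := h.2 W (f.comp (H.equivMapOfInjective e he).toMonoidHom) (w ∘ e)
  have key : ∀ g (hg : g ∈ K) hg', (K.equivMapOfInjective e he).symm ⟨e g, hg'⟩ = ⟨g, hg⟩ :=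
    fun g hg hg' ↦ (MulEquiv.symm_apply_eq _).2 (Subtype.ext (by simp))
  refine ⟨φ.comp (K.equivMapOfInjective e he).symm.toMonoidHom, ?_, ?_⟩
  · rintro _ ⟨g, hg, rfl⟩ hK
    rw [MonoidHom.comp_apply, MulEquiv.toMonoidHom_eq_coe, MonoidHom.coe_coe, key g (h.le hg)]
    exact hφH g hg _
  · rintro _ hK ⟨d, hd, rfl⟩
    rw [MonoidHom.comp_apply, MulEquiv.toMonoidHom_eq_coe, MonoidHom.coe_coe, key d (h.subset hd)]
    exact hφD d _ hd

theorem inv (h : IsFreeComplement D H K) : IsFreeComplement D⁻¹ H K := by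
  refine ⟨by rw [Subgroup.closure_inv, h.1], fun W _ f w ↦ ?_⟩
  obtain ⟨φ, hφH, hφD⟩ := h.2 W f fun g ↦ (w g⁻¹)⁻¹
  refine ⟨φ, hφH, fun d hd hdD ↦ ?_⟩
  have hφd := hφD d⁻¹ (K.inv_mem hd) hdD
  rw [inv_inv] at hφd
  exact inv_injective ((map_inv φ ⟨d, hd⟩).symm.trans hφd)

end IsFreeComplement

theorem IsFreeBasis.isFreeComplement_closure (h : IsFreeBasis (B ∪ D) K) (hBD : Disjoint B D) :
    IsFreeComplement D (Subgroup.closure B) K := by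
  have h' : IsFreeComplement (B ∪ D) ⊥ K := by
    refine ⟨by rw [bot_sup_eq, h.1], fun W _ f w ↦ ?_⟩
    obtain ⟨φ, hφ⟩ := h.exists_hom w
    refine ⟨φ, fun g hH hK ↦ ?_, fun d hK hd ↦ hφ d hK hd⟩
    obtain rfl := Subgroup.mem_bot.1 hH
    exact (map_one φ).trans (map_one f).symm
  simpa using h'.right_of_union hBD

theorem FreeFactor.exists_isFreeComplement (h : FreeFactor H K) :
    ∃ D, IsFreeComplement D H K := by
  obtain ⟨B, C, hB, hC, hBC⟩ := h
  rw [← Set.union_sdiff_cancel hBC] at hC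
  exact ⟨C \ B, hB.1 ▸ hC.isFreeComplement_closure Set.disjoint_sdiff_right⟩

theorem exists_finite_of_mem_sup_closure {g : G} (hg : g ∈ H ⊔ Subgroup.closure D) :
    ∃ D₀ ⊆ D, D₀.Finite ∧ g ∈ H ⊔ Subgroup.closure D₀ := by
  rw [← Subgroup.closure_eq H, ← Subgroup.closure_union] at hg
  induction hg using Subgroup.closure_induction with
  | mem g hg =>
    rcases hg with hg | hg
    · exact ⟨∅, Set.empty_subset _, Set.finite_empty, Subgroup.mem_sup_left hg⟩
    · exact ⟨{g}, Set.singleton_subset_iff.2 hg, Set.finite_singleton g,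
        Subgroup.mem_sup_right (Subgroup.mem_closure_singleton_self g)⟩
  | one => exact ⟨∅, Set.empty_subset _, Set.finite_empty, one_mem _⟩
  | mul a b _ _ iha ihb =>
    obtain ⟨A, hAD, hA, haA⟩ := iha
    obtain ⟨B, hBD, hB, hbB⟩ := ihb
    have hmono : ∀ {X}, X ⊆ A ∪ B → H ⊔ Subgroup.closure X ≤ H ⊔ Subgroup.closure (A ∪ B) :=
      fun hX ↦ sup_le_sup_left (Subgroup.closure_mono hX) H
    exact ⟨A ∪ B, Set.union_subset hAD hBD, hA.union hB,
      mul_mem (hmono Set.subset_union_left haA) (hmono Set.subset_union_right hbB)⟩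
  | inv a _ iha =>
    obtain ⟨A, hAD, hA, haA⟩ := iha
    exact ⟨A, hAD, hA, inv_mem haA⟩

theorem IsFreeComplement.exists_finite (h : IsFreeComplement D H K) (hK : K.FG) :
    ∃ D₀ : Set G, D₀.Finite ∧ IsFreeComplement D₀ H K := by
  obtain ⟨T, rfl⟩ := hK
  choose! E hED hE hTE using fun t (ht : t ∈ T) ↦
    exists_finite_of_mem_sup_closure (h.1.symm ▸ Subgroup.subset_closure ht)
  have hsub : ⋃ t ∈ T, E t ⊆ D := Set.iUnion₂_subset hED
  refine ⟨⋃ t ∈ T, E t, T.finite_toSet.biUnion hE, h.mono hsub (le_antisymm ?_ ?_)⟩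
  · rw [← h.1]
    gcongr
  · refine (Subgroup.closure_le _).2 fun t ht ↦ ?_
    exact sup_le_sup_left (Subgroup.closure_mono (Set.subset_biUnion_of_mem (u := E) ht)) H
      (hTE t ht)

end FreeComplements

section Adjoin

variable {G : Type} [Group G] {H : Subgroup G} {g h x y : G}

/-- The subgroup `⟨H, x⟩`. -/
abbrev adjoin (H : Subgroup G) (x : G) : Subgroup G :=
  H ⊔ Subgroup.closure {x}

theorem le_adjoin (H : Subgroup G) (x : G) : H ≤ adjoin H x :=
  le_sup_left

theorem mem_adjoin_self (H : Subgroup G) (x : G) : x ∈ adjoin H x :=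
  Subgroup.mem_sup_right (Subgroup.mem_closure_singleton_self x)

theorem adjoin_le {K : Subgroup G} : adjoin H x ≤ K ↔ H ≤ K ∧ x ∈ K := by
  simp

theorem adjoin_mul_mul (hg : g ∈ H) (hh : h ∈ H) : adjoin H (g * x * h) = adjoin H x := by
  have hle : ∀ {y g h}, g ∈ H → h ∈ H → adjoin H (g * y * h) ≤ adjoin H y := fun hg hh ↦
    adjoin_le.2 ⟨le_adjoin H _,
      mul_mem (mul_mem (le_adjoin H _ hg) (mem_adjoin_self H _)) (le_adjoin H _ hh)⟩
  refine le_antisymm (hle hg hh) ?_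
  simpa [mul_assoc] using hle (y := g * x * h) (inv_mem hg) (inv_mem hh)

theorem adjoin_inv : adjoin H x⁻¹ = adjoin H x := by
  rw [adjoin, ← Set.inv_singleton, Subgroup.closure_inv]

theorem adjoin_adjoin_comm : adjoin (adjoin H x) y = adjoin (adjoin H y) x :=
  sup_right_comm ..

/-- `⟨H, x⟩` is the free product of `H` and of the infinite cyclic group generated by `x`. -/
def IsFreeOver (H : Subgroup G) (x : G) : Prop :=
  IsFreeComplement {x} H (adjoin H x)

namespace IsFreeOver

theorem notMem (hx : IsFreeOver H x) : x ∉ H :=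
  IsFreeComplement.notMem hx rfl

theorem inv (hx : IsFreeOver H x) : IsFreeOver H x⁻¹ := by
  unfold IsFreeOver
  rw [adjoin_inv, ← Set.inv_singleton]
  exact IsFreeComplement.inv hx

theorem mul_mul (hx : IsFreeOver H x) (hg : g ∈ H) (hh : h ∈ H) : IsFreeOver H (g * x * h) := by
  refine ⟨rfl, fun W _ f w ↦ ?_⟩
  rw [adjoin_mul_mul hg hh]
  obtain ⟨φ, hφH, hφx⟩ := hx.2 W f fun _ ↦ (f ⟨g, hg⟩)⁻¹ * w (g * x * h) * (f ⟨h, hh⟩)⁻¹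
  refine ⟨φ, hφH, ?_⟩
  rintro _ - rfl
  have hmul := congrArg₂ (· * ·) (congrArg₂ (· * ·) (hφH g hg (le_adjoin H x hg))
    (hφx x (mem_adjoin_self H x) rfl)) (hφH h hh (le_adjoin H x hh))
  simpa [mul_assoc, ← map_mul] using hmul

end IsFreeOver

/-- `⟨H, x, y⟩` is the free product of `H` and of a free group with basis `x, y`. -/
def IsFreePair (H : Subgroup G) (x y : G) : Prop :=
  IsFreeOver H x ∧ IsFreeOver (adjoin H x) y

namespace IsFreePair

theorem swap (hxy : IsFreePair H x y) : IsFreePair H y x := by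
  have hyx : IsFreeComplement ({y} ∪ {x}) H (adjoin (adjoin H x) y) := by
    rw [Set.union_comm]
    exact IsFreeComplement.trans hxy.1 hxy.2
  have hne : y ≠ x := fun h ↦ hxy.2.notMem (h ▸ mem_adjoin_self H x)
  refine ⟨hyx.left_of_union, ?_⟩
  unfold IsFreeOver
  rw [← adjoin_adjoin_comm]
  exact hyx.right_of_union (Set.disjoint_singleton.2 hne)

theorem mul_mul (hxy : IsFreePair H x y) (hg : g ∈ adjoin H x) (hh : h ∈ adjoin H x) :
    IsFreePair H x (g * y * h) :=
  ⟨hxy.1, hxy.2.mul_mul hg hh⟩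

theorem inv (hxy : IsFreePair H x y) : IsFreePair H x y⁻¹ :=
  ⟨hxy.1, hxy.2.inv⟩

end IsFreePair

end Adjoin

section CayleyTree

open Relation
open FreeGroup hiding norm norm_eq_zero map map_mul map_inv map_one

variable {A : Type} [DecidableEq A] {u v w z z' g : FreeGroup A}

/-- The distance between two vertices of the Cayley tree of the free group. -/
def treeDist (u v : FreeGroup A) : ℕ :=
  (u⁻¹ * v).norm

/-- The set of vertices of the geodesic from `u` to `v` in the Cayley tree. -/
def interval (u v : FreeGroup A) : Set (FreeGroup A) :=
  {z | treeDist u z + treeDist z v = treeDist u v}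

theorem mem_interval : z ∈ interval u v ↔ treeDist u z + treeDist z v = treeDist u v :=
  Iff.rfl

@[simp]
theorem treeDist_self (u : FreeGroup A) : treeDist u u = 0 := by
  simp [treeDist]

@[simp]
theorem treeDist_eq_zero : treeDist u v = 0 ↔ u = v := by
  rw [treeDist, FreeGroup.norm_eq_zero, inv_mul_eq_one]

theorem treeDist_comm (u v : FreeGroup A) : treeDist u v = treeDist v u := by
  rw [treeDist, ← norm_inv_eq, mul_inv_rev, inv_inv, treeDist]

@[simp]
theorem treeDist_mul_left (g u v : FreeGroup A) :
    treeDist (g * u) (g * v) = treeDist u v := by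
  simp [treeDist, mul_assoc]

theorem treeDist_add_eq_add_even (u v w : FreeGroup A) :
    ∃ n, treeDist u v + treeDist v w = treeDist u w + 2 * n := by
  have hword := toWord_mul (u⁻¹ * v) (v⁻¹ * w)
  rw [show u⁻¹ * v * (v⁻¹ * w) = u⁻¹ * w by group] at hword
  have hred : Red ((u⁻¹ * v).toWord ++ (v⁻¹ * w).toWord) (u⁻¹ * w).toWord :=
    hword ▸ reduce.red
  simpa [treeDist, FreeGroup.norm] using hred.length

theorem treeDist_triangle (u v w : FreeGroup A) :
    treeDist u w ≤ treeDist u v + treeDist v w := by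
  obtain ⟨n, hn⟩ := treeDist_add_eq_add_even u v w
  omega

theorem treeDist_eq_add_one_or (u : FreeGroup A) (h : treeDist v w = 1) :
    treeDist u w = treeDist u v + 1 ∨ treeDist u v = treeDist u w + 1 := by
  obtain ⟨n, hn⟩ := treeDist_add_eq_add_even u v w
  have := treeDist_triangle u w v
  rw [treeDist_comm w v] at this
  omega

theorem treeDist_eq_one_iff :
    treeDist u v = 1 ↔ ∃ a, v = u * of a ∨ u = v * of a := by
  constructor
  · intro h
    obtain ⟨⟨a, b⟩, hab⟩ := List.length_eq_one_iff.1 h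
    refine ⟨a, ?_⟩
    have hmk : u⁻¹ * v = mk [(a, b)] := by rw [← hab, mk_toWord]
    cases b
    · right
      have hinv : (mk [(a, false)] : FreeGroup A) = (of a)⁻¹ := rfl
      rw [hinv, inv_mul_eq_iff_eq_mul, eq_mul_inv_iff_mul_eq] at hmk
      exact hmk.symm
    · exact Or.inl (inv_mul_eq_iff_eq_mul.1 hmk)
  · rintro ⟨a, rfl | rfl⟩
    · simp [treeDist]
    · simp [treeDist]

theorem toWord_eq_append_of_mem_interval (h : z ∈ interval u v) :
    (u⁻¹ * v).toWord = (u⁻¹ * z).toWord ++ (z⁻¹ * v).toWord := by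
  have huv : u⁻¹ * v = u⁻¹ * z * (z⁻¹ * v) := by group
  have hsub := toWord_mul_sublist (u⁻¹ * z) (z⁻¹ * v)
  rw [← huv] at hsub
  exact hsub.eq_of_length (by rw [List.length_append]; exact h.symm)

theorem treeDist_of_toWord_eq_append {L M : List (A × Bool)} (h : (u⁻¹ * v).toWord = L ++ M) :
    treeDist u (u * mk L) = L.length ∧ treeDist (u * mk L) v = M.length := by
  have hred : IsReduced (L ++ M) := h ▸ isReduced_toWord
  have hv : (u * mk L)⁻¹ * v = mk M := by
    rw [mul_inv_rev, mul_assoc, ← mk_toWord (x := u⁻¹ * v), h, ← mul_mk, inv_mul_cancel_left]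
  constructor
  · rw [treeDist, inv_mul_cancel_left, FreeGroup.norm, toWord_mk,
      (hred.infix (List.prefix_append L M).isInfix).reduce_eq]
  · rw [treeDist, hv, FreeGroup.norm, toWord_mk,
      (hred.infix (List.suffix_append L M).isInfix).reduce_eq]

theorem exists_treeDist_eq_one_of_ne (h : u ≠ v) :
    ∃ w, treeDist w v = 1 ∧ treeDist u v = treeDist u w + 1 := by
  have hne : (u⁻¹ * v).toWord ≠ [] := by
    rwa [ne_eq, toWord_eq_nil_iff, inv_mul_eq_one]
  have happ := (List.dropLast_concat_getLast hne).symm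
  obtain ⟨huw, hwv⟩ := treeDist_of_toWord_eq_append happ
  refine ⟨_, hwv, ?_⟩
  rw [huw, treeDist, FreeGroup.norm, happ]
  simp

theorem mem_interval_of_treeDist_le (hz : z ∈ interval u w) (hv : v ∈ interval u w)
    (hle : treeDist u z ≤ treeDist u v) : z ∈ interval u v := by
  have hpre : (u⁻¹ * z).toWord <+: (u⁻¹ * v).toWord :=
    List.prefix_of_prefix_length_le ⟨_, (toWord_eq_append_of_mem_interval hz).symm⟩
      ⟨_, (toWord_eq_append_of_mem_interval hv).symm⟩ hle
  obtain ⟨M, hM⟩ := hpre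
  have hdist := treeDist_of_toWord_eq_append hM.symm
  rw [mk_toWord, mul_inv_cancel_left] at hdist
  rw [mem_interval, hdist.1, hdist.2, ← List.length_append, hM, treeDist, FreeGroup.norm]

theorem interval_comm (u v : FreeGroup A) : interval u v = interval v u := by
  ext z
  rw [mem_interval, mem_interval, treeDist_comm u z, treeDist_comm z v, treeDist_comm u v, add_comm]

theorem left_mem_interval (u v : FreeGroup A) : u ∈ interval u v := by
  simp [mem_interval]

theorem right_mem_interval (u v : FreeGroup A) : v ∈ interval u v := by
  simp [mem_interval]

theorem mul_mem_interval_mul (g : FreeGroup A) :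
    g * z ∈ interval (g * u) (g * v) ↔ z ∈ interval u v := by
  simp [mem_interval]

theorem interval_subset_interval (hz : z ∈ interval u v) : interval u z ⊆ interval u v := by
  intro y hy
  have := treeDist_triangle u y v
  have := treeDist_triangle y z v
  rw [mem_interval] at *
  omega

theorem rel_of_edge_mem_geodesic {r : FreeGroup A → FreeGroup A → Prop}
    (hr : ∀ u v, r u v → treeDist u v = 1) (huv : ReflTransGen r u v)
    (hz : treeDist z z' = 1) (hgeod : treeDist u z + 1 + treeDist z' v = treeDist u v) :
    r z z' := by
  induction huv with
  | refl => simp at hgeod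
  | @tail v w _ hvw ih =>
    have hd := hr v w hvw
    have hzz' := treeDist_triangle u z z'
    have hz'w := treeDist_triangle u z' w
    have hzv := treeDist_triangle u z v
    have hzz'v := treeDist_triangle z z' v
    have hz'wv := treeDist_triangle z' w v
    rw [treeDist_comm w v] at hz'wv
    rcases treeDist_eq_add_one_or u hd with h | h
    · have hv : v ∈ interval u w := by rw [mem_interval]; omega
      by_cases hw : z' = w
      · subst hw
        have hzu : z ∈ interval u z' := by rw [mem_interval]; omega
        have hzv' : z ∈ interval u v := mem_interval_of_treeDist_le hzu hv (by omega)
        rw [mem_interval] at hzv'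
        rw [treeDist_self] at hgeod
        have hzv0 : treeDist z v = 0 := by omega
        rwa [treeDist_eq_zero.1 hzv0]
      · have hpos : treeDist z' w ≠ 0 := treeDist_eq_zero.not.2 hw
        have hz'v : z' ∈ interval u v :=
          mem_interval_of_treeDist_le (by rw [mem_interval]; omega) hv (by omega)
        rw [mem_interval] at hz'v
        exact ih (by omega)
    · exact ih (by omega)

/-- `Linked Y u v`: there is a path from `u` to `v` in the subgraph of the Cayley tree induced
on `Y`. -/
def Linked (Y : Set (FreeGroup A)) : FreeGroup A → FreeGroup A → Prop :=
  ReflTransGen fun u v ↦ u ∈ Y ∧ v ∈ Y ∧ treeDist u v = 1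

namespace Linked

variable {X Y : Set (FreeGroup A)}

theorem symm (h : Linked Y u v) : Linked Y v u := by
  have hsymm : Std.Symm fun u v ↦ u ∈ Y ∧ v ∈ Y ∧ treeDist u v = 1 :=
    ⟨fun u v huv ↦ ⟨huv.2.1, huv.1, treeDist_comm u v ▸ huv.2.2⟩⟩
  exact ReflTransGen.stdSymm.symm _ _ h

theorem trans (huv : Linked Y u v) (hvw : Linked Y v w) : Linked Y u w :=
  ReflTransGen.trans huv hvw

theorem mono (hXY : X ⊆ Y) (h : Linked X u v) : Linked Y u v :=
  ReflTransGen.mono (fun _ _ huv ↦ ⟨hXY huv.1, hXY huv.2.1, huv.2.2⟩) u v h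

theorem mul_left (hg : ∀ y ∈ Y, g * y ∈ Y) (h : Linked Y u v) : Linked Y (g * u) (g * v) :=
  ReflTransGen.lift (g * ·)
    (fun _ _ huv ↦ ⟨hg _ huv.1, hg _ huv.2.1, by simpa using huv.2.2⟩) u v h

theorem interval_subset (h : Linked Y u v) (hv : v ∈ Y) : interval u v ⊆ Y := by
  intro z hz
  by_cases hzv : v = z
  · exact hzv ▸ hv
  obtain ⟨z', hz'z, hz'v⟩ := exists_treeDist_eq_one_of_ne hzv
  have hz₁ : treeDist z z' = 1 := treeDist_comm z z' ▸ hz'z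
  refine (rel_of_edge_mem_geodesic (fun _ _ h ↦ h.2.2) h hz₁ ?_).1
  rw [mem_interval] at hz
  rw [treeDist_comm z v, hz'v, treeDist_comm v z'] at hz
  omega

end Linked

theorem linked_interval (u v : FreeGroup A) : Linked (interval u v) u v := by
  induction hn : treeDist u v generalizing v with
  | zero => rw [treeDist_eq_zero.1 hn]; exact .refl
  | succ n ih =>
    obtain ⟨w, hwv, huv⟩ := exists_treeDist_eq_one_of_ne (u := u) (v := v) fun h ↦ by simp [h] at hn
    have hw : w ∈ interval u v := by rw [mem_interval]; omega
    exact ((ih w (by omega)).mono (interval_subset_interval hw)).tail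
      ⟨hw, right_mem_interval u v, hwv⟩

theorem exists_median (u v w : FreeGroup A) :
    ∃ m, m ∈ interval u v ∧ m ∈ interval u w ∧ m ∈ interval v w := by
  induction hn : treeDist v w generalizing w with
  | zero =>
    rw [treeDist_eq_zero.1 hn]
    exact ⟨w, right_mem_interval u w, right_mem_interval u w, left_mem_interval w w⟩
  | succ n ih =>
    obtain ⟨x, hxw, hvw⟩ := exists_treeDist_eq_one_of_ne (u := v) (v := w) fun h ↦ by simp [h] at hn
    obtain ⟨m, huv, hux, hvx⟩ := ih x (by omega)
    have hx : x ∈ interval v w := by rw [mem_interval]; omega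
    rcases treeDist_eq_add_one_or u hxw with h | h
    · have hx' : x ∈ interval u w := by rw [mem_interval]; omega
      exact ⟨m, huv, interval_subset_interval hx' hux, interval_subset_interval hx hvx⟩
    · have hw : w ∈ interval u x := by rw [mem_interval, treeDist_comm w x]; omega
      by_cases hm : m = x
      · subst hm
        exact ⟨w, interval_subset_interval huv hw, right_mem_interval u w, right_mem_interval v w⟩
      · have hpos : treeDist m x ≠ 0 := treeDist_eq_zero.not.2 hm
        have hmw : m ∈ interval u w := by
          refine mem_interval_of_treeDist_le hux hw ?_
          rw [mem_interval] at hux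
          omega
        exact ⟨m, huv, hmw, interval_subset_interval hx hvx⟩

theorem mem_interval_of_edge_directed (hu : treeDist u z' = treeDist u z + 1)
    (hz : treeDist z z' = 1) (hv : treeDist z v = treeDist z' v + 1) :
    z ∈ interval u v ∧ z' ∈ interval u v := by
  obtain ⟨m, hmu, hmv, hm⟩ := exists_median z' u v
  rw [interval_comm] at hmu
  by_cases heq : m = z'
  · subst heq
    simp only [mem_interval] at *
    omega
  · have hpos : treeDist m z' ≠ 0 := treeDist_eq_zero.not.2 heq
    have hzu : z ∈ interval u z' := by rw [mem_interval]; omega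
    have hle : treeDist u m ≤ treeDist u z := by rw [mem_interval] at hmu; omega
    have hmz := mem_interval_of_treeDist_le hmu hzu hle
    have htri := treeDist_triangle z m v
    rw [treeDist_comm z m] at htri
    rw [mem_interval, treeDist_comm] at hmv
    rw [mem_interval] at hmz hmu
    omega

end CayleyTree

section Hull

open Relation
open FreeGroup hiding norm norm_eq_zero map map_mul map_inv map_one

variable {A : Type} [DecidableEq A] {G H : Subgroup (FreeGroup A)} {u v g x : FreeGroup A}
  {S Y : Set (FreeGroup A)}

/-- The convex hull of the subgroup `G` in the Cayley tree. Its quotient by `G`, rooted at the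
orbit of `1`, is the Stallings automaton `Γ_A(G)`. -/
def hull (G : Subgroup (FreeGroup A)) : Set (FreeGroup A) :=
  {x | ∃ g ∈ G, ∃ h ∈ G, x ∈ interval g h}

theorem subset_hull (G : Subgroup (FreeGroup A)) : (G : Set (FreeGroup A)) ⊆ hull G :=
  fun g hg ↦ ⟨g, hg, g, hg, left_mem_interval g g⟩

theorem one_mem_hull (G : Subgroup (FreeGroup A)) : 1 ∈ hull G :=
  subset_hull G G.one_mem

theorem mul_mem_hull (hg : g ∈ G) (hx : x ∈ hull G) : g * x ∈ hull G := by
  obtain ⟨a, ha, b, hb, hx⟩ := hx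
  exact ⟨g * a, mul_mem hg ha, g * b, mul_mem hg hb, (mul_mem_interval_mul g).2 hx⟩

theorem hull_mono (hGH : G ≤ H) : hull G ⊆ hull H :=
  fun _ ⟨a, ha, b, hb, hx⟩ ↦ ⟨a, hGH ha, b, hGH hb, hx⟩

theorem linked_hull_one (hx : x ∈ hull G) : Linked (hull G) 1 x := by
  obtain ⟨g, hg, h, hh, hx⟩ := hx
  have h1 : interval 1 g ⊆ hull G := fun y hy ↦ ⟨1, G.one_mem, g, hg, hy⟩
  have h2 : interval g x ⊆ hull G := fun y hy ↦ ⟨g, hg, h, hh, interval_subset_interval hx hy⟩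
  exact ((linked_interval 1 g).mono h1).trans ((linked_interval g x).mono h2)

theorem interval_subset_hull (hu : u ∈ hull G) (hv : v ∈ hull G) : interval u v ⊆ hull G :=
  Linked.interval_subset ((linked_hull_one hu).symm.trans (linked_hull_one hv)) hv

theorem hull_closure_subset (hSY : ∀ s ∈ Subgroup.closure S, ∀ y ∈ Y, s * y ∈ Y) (h1 : 1 ∈ Y)
    (hlink : ∀ s ∈ S, Linked Y 1 s) : hull (Subgroup.closure S) ⊆ Y := by
  have hlink' : ∀ s ∈ Subgroup.closure S, Linked Y 1 s := by
    intro s hs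
    induction hs using Subgroup.closure_induction with
    | mem s hs => exact hlink s hs
    | one => exact .refl
    | mul a b ha _ iha ihb => exact iha.trans (by simpa using ihb.mul_left (hSY a ha))
    | inv a ha iha => simpa using (iha.mul_left (hSY a⁻¹ (inv_mem ha))).symm
  rintro x ⟨g, hg, h, hh, hx⟩
  have hx' : g⁻¹ * x ∈ interval 1 (g⁻¹ * h) := by
    rw [← mul_mem_interval_mul g]; simpa using hx
  have hgh := mul_mem (inv_mem hg) hh
  have hY := (hlink' _ hgh).interval_subset (by simpa using hSY _ hgh 1 h1) hx'
  simpa using hSY g hg _ hY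

theorem hull_adjoin_subset (hY : ∀ g ∈ adjoin G x, ∀ y ∈ Y, g * y ∈ Y) (hG : hull G ⊆ Y)
    (hu : u ∈ hull G) (hv : v ∈ hull G) (hlink : Linked Y u (x * v)) : hull (adjoin G x) ⊆ Y := by
  have hGx : adjoin G x = Subgroup.closure (G ∪ {x}) := by
    rw [Subgroup.closure_union, Subgroup.closure_eq]
  rw [hGx] at hY ⊢
  refine hull_closure_subset hY (hG (one_mem_hull G)) ?_
  rintro s (hs | rfl)
  · exact (linked_hull_one (subset_hull G hs)).mono hG
  · have hvs := ((linked_hull_one hv).mono hG).symm.mul_left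
      (hY s (hGx ▸ mem_adjoin_self G s))
    simpa using (((linked_hull_one hu).mono hG).trans hlink).trans hvs

theorem exists_mul_of_mem_hull_adjoin (hu : u ∈ hull G) (hv : v ∈ hull G) {y : FreeGroup A}
    (hy : y ∈ hull (adjoin G x)) :
    ∃ g ∈ adjoin G x, ∃ z ∈ hull G ∪ interval u (x * v), y = g * z := by
  let Y := {y | ∃ g ∈ adjoin G x, ∃ z ∈ hull G ∪ interval u (x * v), y = g * z}
  have hsub : hull G ∪ interval u (x * v) ⊆ Y := fun z hz ↦ ⟨1, one_mem _, z, hz, (one_mul z).symm⟩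
  refine hull_adjoin_subset (Y := Y) ?_ (Set.subset_union_left.trans hsub) hu hv
    ((linked_interval u _).mono (Set.subset_union_right.trans hsub)) hy
  rintro g hg _ ⟨h, hh, z, hz, rfl⟩
  exact ⟨g * h, mul_mem hg hh, z, hz, (mul_assoc ..).symm⟩

end Hull

section HullEmbedding

open FreeGroup hiding norm norm_eq_zero map map_mul map_inv map_one

variable {A : Type} [DecidableEq A] {G H K : Subgroup (FreeGroup A)} {u v x : FreeGroup A}
  {Y : Set (FreeGroup A)}

/-- `Y` is the vertex set of a `G`-invariant subtree of the Cayley tree passing through `1`. -/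
structure IsInvariantSubtree (G : Subgroup (FreeGroup A)) (Y : Set (FreeGroup A)) : Prop where
  one_mem : 1 ∈ Y
  mul_left_mem : ∀ g ∈ G, ∀ y ∈ Y, g * y ∈ Y
  linked : ∀ y ∈ Y, Linked Y 1 y

theorem isInvariantSubtree_hull (G : Subgroup (FreeGroup A)) : IsInvariantSubtree G (hull G) :=
  ⟨one_mem_hull G, fun _ hg _ ↦ mul_mem_hull hg, fun _ ↦ linked_hull_one⟩

/-- The map `G \ Y → K \ F(A)` is injective, given that `Y` is `G`-invariant. For `Y = hull G` this
says that `Γ_A(G)` embeds in the covering of the bouquet of circles associated with `K`. -/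
def EmbedsModulo (Y : Set (FreeGroup A)) (G K : Subgroup (FreeGroup A)) : Prop :=
  ∀ u ∈ Y, ∀ k ∈ K, k * u ∈ Y → k ∈ G

theorem apply_eq_of_linked {W : Type} (σ : FreeGroup A →* Equiv.Perm W) {pt : FreeGroup A → W}
    (h : ∀ y b, y ∈ Y → y * of b ∈ Y → σ (of b) (pt (y * of b)) = pt y) {y : FreeGroup A}
    (hy : Linked Y 1 y) : σ y (pt y) = pt 1 := by
  induction hy with
  | refl => rw [map_one, Equiv.Perm.one_apply]
  | @tail y z _ hyz ih =>
    obtain ⟨hy, hz, hdist⟩ := hyz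
    rcases treeDist_eq_one_iff.1 hdist with ⟨b, rfl | rfl⟩
    · rw [map_mul, Equiv.Perm.mul_apply, h y b hy hz, ih]
    · rw [← h z b hz hy, ← Equiv.Perm.mul_apply, ← map_mul, ih]

namespace IsInvariantSubtree

theorem embedsModulo_of_perm (hY : IsInvariantSubtree G Y) {W : Type}
    (σ : FreeGroup A →* Equiv.Perm W) {pt : FreeGroup A → W}
    (hσ : ∀ y b, y ∈ Y → y * of b ∈ Y → σ (of b) (pt (y * of b)) = pt y)
    (hpt : ∀ y z, pt y = pt z → y * z⁻¹ ∈ G) (hK : ∀ k ∈ K, σ k (pt 1) = pt 1) :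
    EmbedsModulo Y G K := by
  intro y hy k hk hky
  have hptk : σ k (σ y (pt (k * y))) = σ k (pt 1) := by
    rw [← Equiv.Perm.mul_apply, ← map_mul, apply_eq_of_linked σ hσ (hY.linked _ hky), hK k hk]
  have hpty : σ y (pt (k * y)) = σ y (pt y) :=
    ((σ k).injective hptk).trans (apply_eq_of_linked σ hσ (hY.linked y hy)).symm
  simpa using hpt _ _ ((σ y).injective hpty)

/- The quotient `F(A) ⧸ G`, seen as the covering of the bouquet of circles associated with `G`, is
modified at one edge labeled `a`, which is redirected to join the images of `u` and `v`. Closed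
paths at the base point then read a subgroup containing `G` and `x`. -/
theorem embedsModulo_of_eq_mul_of (hY : IsInvariantSubtree G Y) (hx : ∀ y ∈ Y, x * y ∉ Y)
    (hu : u ∈ Y) (hv : v ∈ Y) {a : A} (huv : x * v = u * of a) :
    EmbedsModulo Y G (adjoin G x) := by
  classical
  let pt (y : FreeGroup A) : FreeGroup A ⧸ G := ↑y⁻¹
  have hpt (y z) : pt y = pt z → y * z⁻¹ ∈ G := fun h ↦ by
    simpa using QuotientGroup.eq.1 h
  have hpt_mul (y b) : of b • pt (y * of b) = pt y := by
    simp [pt]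
  let τ : Equiv.Perm (FreeGroup A ⧸ G) := Equiv.swap (pt (u * of a)) (pt v)
  let σ : FreeGroup A →* Equiv.Perm (FreeGroup A ⧸ G) :=
    FreeGroup.lift fun b ↦ MulAction.toPerm (of b) * if b = a then τ else 1
  have hσ_edge (y b) (hy : y ∈ Y) (hyb : y * of b ∈ Y) : σ (of b) (pt (y * of b)) = pt y := by
    by_cases hb : b = a
    · subst hb
      have h₁ : pt (y * of b) ≠ pt (u * of b) := fun h ↦ by
        have hmem := hY.mul_left_mem _ (inv_mem (hpt _ _ h)) _ hyb
        exact hx v hv (by rw [huv]; simpa [mul_assoc] using hmem)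
      have h₂ : pt (y * of b) ≠ pt v := fun h ↦ by
        have hmem := hY.mul_left_mem _ (inv_mem (hpt _ _ h)) y hy
        exact hx _ hmem (by rw [eq_mul_inv_of_mul_eq huv]; simpa [mul_assoc] using hu)
      simp only [σ, FreeGroup.lift_apply_of, if_true, Equiv.Perm.mul_apply, τ,
        Equiv.swap_apply_of_ne_of_ne h₁ h₂, MulAction.toPerm_apply, hpt_mul]
    · simp only [σ, FreeGroup.lift_apply_of, if_neg hb, mul_one, MulAction.toPerm_apply, hpt_mul]
  have hσ (y) (hy : y ∈ Y) : σ y (pt y) = pt 1 := apply_eq_of_linked σ hσ_edge (hY.linked y hy)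
  have hstab : adjoin G x ≤ (MulAction.stabilizer _ (pt 1)).comap σ := by
    refine adjoin_le.2 ⟨fun g hg ↦ ?_, ?_⟩
    · have hptg : pt g = pt 1 := QuotientGroup.eq.2 (by simpa using hg)
      have hgY : g ∈ Y := by simpa using hY.mul_left_mem g hg 1 hY.one_mem
      change σ g (pt 1) = pt 1
      rw [← hptg, hσ g hgY, hptg]
    · have hσa : σ (of a) (pt v) = pt u := by simp [σ, τ, hpt_mul]
      change σ x (pt 1) = pt 1
      rw [← hσ v hv, ← Equiv.Perm.mul_apply, ← map_mul, huv, map_mul, Equiv.Perm.mul_apply, hσa,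
        hσ u hu, hσ v hv]
  exact hY.embedsModulo_of_perm σ hσ_edge hpt fun k hk ↦ hstab hk

theorem embedsModulo_of_treeDist_eq_one (hY : IsInvariantSubtree G Y) (hx : ∀ y ∈ Y, x * y ∉ Y)
    (hu : u ∈ Y) (hv : v ∈ Y) (huv : treeDist u (x * v) = 1) : EmbedsModulo Y G (adjoin G x) := by
  rcases treeDist_eq_one_iff.1 huv with ⟨a, h | h⟩
  · exact hY.embedsModulo_of_eq_mul_of hx hu hv h
  · have hx' : ∀ y ∈ Y, x⁻¹ * y ∉ Y := fun y hy hxy ↦ hx _ hxy (by simpa using hy)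
    rw [← adjoin_inv]
    exact hY.embedsModulo_of_eq_mul_of hx' hv hu (a := a) (by rw [h]; group)

theorem union_orbit (hY : IsInvariantSubtree G Y) (hu : u ∈ Y) {w : FreeGroup A}
    (huw : treeDist u w = 1) : IsInvariantSubtree G (Y ∪ {y | ∃ g ∈ G, y = g * w}) where
  one_mem := Or.inl hY.one_mem
  mul_left_mem := by
    rintro g hg y (hy | ⟨h, hh, rfl⟩)
    · exact Or.inl (hY.mul_left_mem g hg y hy)
    · exact Or.inr ⟨g * h, mul_mem hg hh, (mul_assoc ..).symm⟩
  linked := by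
    rintro y (hy | ⟨g, hg, rfl⟩)
    · exact (hY.linked y hy).mono Set.subset_union_left
    · have hgu := hY.mul_left_mem g hg u hu
      exact ((hY.linked _ hgu).mono Set.subset_union_left).tail
        ⟨Or.inl hgu, Or.inr ⟨g, hg, rfl⟩, by simpa using huw⟩

theorem disjoint_union_orbit (hY : IsInvariantSubtree G Y) (hx : ∀ y ∈ Y, x * y ∉ Y) (hu : u ∈ Y)
    {w : FreeGroup A} (huw : treeDist u w = 1)
    (hmin : ∀ y ∈ Y, ∀ z ∈ Y, 1 < treeDist y (x * z)) :
    ∀ y ∈ Y ∪ {y | ∃ g ∈ G, y = g * w}, x * y ∉ Y ∪ {y | ∃ g ∈ G, y = g * w} := by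
  rintro y (hy | ⟨g, hg, rfl⟩) (hxy | ⟨h, hh, hxy⟩)
  · exact hx y hy hxy
  · refine (hmin _ (hY.mul_left_mem h hh u hu) y hy).ne' ?_
    rw [hxy, treeDist_mul_left, huw]
  · refine (hmin _ hxy _ (hY.mul_left_mem g hg u hu)).ne' ?_
    rw [treeDist_mul_left, treeDist_mul_left, treeDist_comm, huw]
  · rw [← mul_assoc, mul_left_inj] at hxy
    refine hx 1 hY.one_mem (hY.mul_left_mem x ?_ 1 hY.one_mem)
    rw [eq_mul_inv_of_mul_eq hxy]
    exact mul_mem hh (inv_mem hg)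

/- If `Y` and `xY` are at distance more than `1`, then `Y` is enlarged by the orbit of the next
vertex on a shortest path from `Y` to `xY`. -/
theorem embedsModulo_of_treeDist_eq {n : ℕ} (hY : IsInvariantSubtree G Y)
    (hx : ∀ y ∈ Y, x * y ∉ Y) (hu : u ∈ Y) (hv : v ∈ Y) (hn : treeDist u (x * v) = n) :
    EmbedsModulo Y G (adjoin G x) := by
  induction n using Nat.strong_induction_on generalizing Y u v with
  | _ n ih =>
    by_cases hmin : ∃ y ∈ Y, ∃ z ∈ Y, treeDist y (x * z) < n
    · obtain ⟨y, hy, z, hz, hyz⟩ := hmin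
      exact ih _ hyz hY hx hy hz rfl
    push Not at hmin
    have hne : x * v ≠ u := fun h ↦ hx v hv (h ▸ hu)
    obtain ⟨w, hwu, hvu⟩ := exists_treeDist_eq_one_of_ne hne
    rw [treeDist_comm] at hwu
    rw [treeDist_comm, hn, treeDist_comm] at hvu
    by_cases hn1 : n = 1
    · exact hY.embedsModulo_of_treeDist_eq_one hx hu hv (hn.trans hn1)
    have hdisj := hY.disjoint_union_orbit hx hu hwu fun y hy z hz ↦ by
      have := hmin y hy z hz
      have : treeDist u (x * v) ≠ 0 := treeDist_eq_zero.not.2 hne.symm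
      omega
    have hY' := ih _ (by omega) (hY.union_orbit hu hwu) hdisj
      (Or.inr ⟨1, G.one_mem, (one_mul w).symm⟩) (Or.inl hv) rfl
    exact fun y hy k hk hky ↦ hY' y (Or.inl hy) k hk (Or.inl hky)

theorem embedsModulo_adjoin (hY : IsInvariantSubtree G Y) (hx : ∀ y ∈ Y, x * y ∉ Y) :
    EmbedsModulo Y G (adjoin G x) :=
  hY.embedsModulo_of_treeDist_eq hx hY.one_mem hY.one_mem rfl

end IsInvariantSubtree

end HullEmbedding

section HullDistance

open FreeGroup hiding norm norm_eq_zero map map_mul map_inv map_one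

variable {A : Type} [DecidableEq A] {G K L : Subgroup (FreeGroup A)} {g h u v x y z : FreeGroup A}

theorem EmbedsModulo.trans (hGL : G ≤ L) (hG : EmbedsModulo (hull G) G L)
    (hL : EmbedsModulo (hull L) L K) : EmbedsModulo (hull G) G K :=
  fun u hu k hk hku ↦ hG u hu k (hL u (hull_mono hGL hu) k hk (hull_mono hGL hku)) hku

/-- The distance between the convex hull of `G` and its translate by `x`. -/
noncomputable def hullDist (G : Subgroup (FreeGroup A)) (x : FreeGroup A) : ℕ :=
  sInf {n | ∃ u ∈ hull G, ∃ v ∈ hull G, treeDist u (x * v) = n}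

theorem hullDist_le (hu : u ∈ hull G) (hv : v ∈ hull G) : hullDist G x ≤ treeDist u (x * v) :=
  Nat.sInf_le ⟨u, hu, v, hv, rfl⟩

theorem exists_treeDist_eq_hullDist (G : Subgroup (FreeGroup A)) (x : FreeGroup A) :
    ∃ u ∈ hull G, ∃ v ∈ hull G, treeDist u (x * v) = hullDist G x :=
  Nat.sInf_mem (s := {n | ∃ u ∈ hull G, ∃ v ∈ hull G, treeDist u (x * v) = n})
    ⟨_, 1, one_mem_hull G, 1, one_mem_hull G, rfl⟩

theorem hullDist_eq_zero_iff : hullDist G x = 0 ↔ ∃ v ∈ hull G, x * v ∈ hull G := by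
  constructor
  · intro h0
    obtain ⟨u, hu, v, hv, huv⟩ := exists_treeDist_eq_hullDist G x
    rw [h0, treeDist_eq_zero] at huv
    exact ⟨v, hv, huv ▸ hu⟩
  · rintro ⟨v, hv, hxv⟩
    simpa using hullDist_le (x := x) hxv hv

theorem embedsModulo_hull_adjoin (hx : hullDist G x ≠ 0) :
    EmbedsModulo (hull G) G (adjoin G x) :=
  (isInvariantSubtree_hull G).embedsModulo_adjoin fun v hv hxv ↦
    hx (hullDist_eq_zero_iff.2 ⟨v, hv, hxv⟩)

/-- The pair `(x, y)` can be exchanged for another free pair that generates the same subgroup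
together with `G`, the first element being closer to `G`, and the distances of the two elements
adding up to at most the distance of `x`. -/
def IsImprovable (G : Subgroup (FreeGroup A)) (x y : FreeGroup A) : Prop :=
  ∃ x' y', IsFreePair G x' y' ∧ adjoin (adjoin G x') y' = adjoin (adjoin G x) y ∧
    hullDist G x' < hullDist G x ∧ hullDist G x' + hullDist (adjoin G x') y' ≤ hullDist G x

namespace IsImprovable

theorem of_mul_mul (hg : g ∈ adjoin G x) (hh : h ∈ adjoin G x)
    (H : IsImprovable G x (g * y * h)) : IsImprovable G x y := by
  rwa [IsImprovable, adjoin_mul_mul hg hh] at H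

theorem of_inv (H : IsImprovable G x y⁻¹) : IsImprovable G x y := by
  rwa [IsImprovable, adjoin_inv] at H

theorem of_mem_hull (hxy : IsFreePair G x y) (hx : hullDist G x ≠ 0) (hz : z ∈ hull G)
    (hyz : y * z ∈ hull G) : IsImprovable G x y := by
  have hy : hullDist G y = 0 := hullDist_eq_zero_iff.2 ⟨z, hz, hyz⟩
  obtain ⟨u, hu, v, hv, huv⟩ := exists_treeDist_eq_hullDist G x
  have hle : hullDist (adjoin G y) x ≤ treeDist u (x * v) :=
    hullDist_le (hull_mono (le_adjoin G y) hu) (hull_mono (le_adjoin G y) hv)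
  exact ⟨y, x, hxy.swap, adjoin_adjoin_comm, by omega, by omega⟩

theorem of_mem_hull_of_mem_interval (hxy : IsFreePair G x y) (hx : hullDist G x ≠ 0)
    (hu : u ∈ hull G) (hv : v ∈ hull G) (huv : treeDist u (x * v) = hullDist G x)
    (hz : z ∈ hull G) (hyz : y * z ∈ interval u (x * v)) : IsImprovable G x y := by
  by_cases heq : y * z = x * v
  · have hxmem := inv_mem (mem_adjoin_self G x)
    exact of_mul_mul hxmem (one_mem _)
      (of_mem_hull (hxy.mul_mul hxmem (one_mem _)) hx hz (by simpa [mul_assoc, heq] using hv))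
  have hpos : treeDist (y * z) (x * v) ≠ 0 := treeDist_eq_zero.not.2 heq
  have hy : hullDist G y ≤ treeDist u (y * z) := hullDist_le hu hz
  have hle : hullDist (adjoin G y) x ≤ treeDist (y * z) (x * v) :=
    hullDist_le (mul_mem_hull (mem_adjoin_self G y) (hull_mono (le_adjoin G y) hz))
      (hull_mono (le_adjoin G y) hv)
  rw [mem_interval] at hyz
  exact ⟨y, x, hxy.swap, adjoin_adjoin_comm, by omega, by omega⟩

/- Here `y` translates a segment of the geodesic `[u, xv]` into a position closer to `u`; replacing
`x` by `yx` removes the part in between, and `y` is measured at the branch point `m`. -/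
theorem of_mem_interval_of_lt (hxy : IsFreePair G x y)
    (hu : u ∈ hull G) (hv : v ∈ hull G) (huv : treeDist u (x * v) = hullDist G x)
    (hz : z ∈ interval u (x * v)) (hyz : y * z ∈ interval u (x * v))
    (hlt : treeDist u (y * z) < treeDist u z) : IsImprovable G x y := by
  obtain ⟨m, hm_yz, hm, hm'⟩ := exists_median u (y * z) (y * (x * v))
  have hpair : IsFreePair G (y * x) y := by
    simpa using (hxy.swap.mul_mul (mem_adjoin_self G y) (one_mem _)).swap
  have hadj : adjoin (adjoin G (y * x)) y = adjoin (adjoin G x) y := by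
    rw [adjoin_adjoin_comm, adjoin_adjoin_comm (x := x)]
    simpa using adjoin_mul_mul (x := x) (mem_adjoin_self G y) (one_mem _)
  have hm_mem : m ∈ hull (adjoin G (y * x)) :=
    interval_subset_hull (hull_mono (le_adjoin G _) hu)
      (by simpa [mul_assoc] using
        mul_mem_hull (mem_adjoin_self G (y * x)) (hull_mono (le_adjoin G _) hv)) hm
  have hyx : hullDist G (y * x) ≤ treeDist u (y * (x * v)) := by
    simpa [mul_assoc] using hullDist_le (x := y * x) hu hv
  have hy : hullDist (adjoin G (y * x)) y ≤ treeDist m (y * m) := hullDist_le hm_mem hm_mem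
  have hym := treeDist_triangle m (y * z) (y * m)
  have hzm := treeDist_triangle z (y * z) m
  have huz : y * z ∈ interval u z := mem_interval_of_treeDist_le hyz hz hlt.le
  have hcomm := treeDist_comm m (y * z)
  have hcomm' := treeDist_comm z (y * z)
  simp only [mem_interval, treeDist_mul_left] at *
  exact ⟨y * x, y, hpair, hadj, by omega, by omega⟩

theorem of_mem_interval (hxy : IsFreePair G x y)
    (hu : u ∈ hull G) (hv : v ∈ hull G) (huv : treeDist u (x * v) = hullDist G x)
    (hz : z ∈ interval u (x * v)) (hyz : y * z ∈ interval u (x * v)) : IsImprovable G x y := by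
  rcases lt_trichotomy (treeDist u (y * z)) (treeDist u z) with hlt | heq | hgt
  · exact of_mem_interval_of_lt hxy hu hv huv hz hyz hlt
  · have huz := mem_interval_of_treeDist_le hyz hz heq.le
    rw [mem_interval, heq, Nat.add_eq_left, treeDist_eq_zero, mul_eq_right] at huz
    exact absurd (huz ▸ one_mem _) hxy.2.notMem
  · exact of_inv (of_mem_interval_of_lt hxy.inv hu hv huv hyz (by simpa using hz)
      (by simpa using hgt))

end IsImprovable

theorem IsFreePair.isImprovable (hxy : IsFreePair G x y) (hx : hullDist G x ≠ 0)
    (hy : hullDist (adjoin G x) y = 0) : IsImprovable G x y := by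
  obtain ⟨u, hu, v, hv, huv⟩ := exists_treeDist_eq_hullDist G x
  obtain ⟨w, hw, hyw⟩ := hullDist_eq_zero_iff.1 hy
  obtain ⟨g, hg, z, hz, rfl⟩ := exists_mul_of_mem_hull_adjoin hu hv hw
  obtain ⟨h, hh, z', hz', hyz⟩ := exists_mul_of_mem_hull_adjoin hu hv hyw
  obtain rfl : h⁻¹ * y * g * z = z' := by rw [mul_assoc h⁻¹, mul_assoc, mul_assoc y, hyz]; group
  refine .of_mul_mul (inv_mem hh) hg ?_
  have hxy' := hxy.mul_mul (inv_mem hh) hg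
  rcases hz with hz | hz <;> rcases hz' with hz' | hz'
  · exact .of_mem_hull hxy' hx hz hz'
  · exact .of_mem_hull_of_mem_interval hxy' hx hu hv huv hz hz'
  · refine .of_inv (.of_mem_hull_of_mem_interval hxy'.inv hx hu hv huv hz' ?_)
    rwa [inv_mul_cancel_left]
  · exact .of_mem_interval hxy' hu hv huv hz hz'

end HullDistance

section FreeChains

variable {G : Type} [Group G] {H K : Subgroup G} {D : Set G}

/-- `K` is obtained from `H` by freely adjoining the elements of a list one after the other. -/
def IsFreeChain (K : Subgroup G) : Subgroup G → List G → Prop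
  | H, [] => H = K
  | H, x :: l => IsFreeOver H x ∧ IsFreeChain K (adjoin H x) l

theorem IsFreeChain.le {l : List G} (hl : IsFreeChain K H l) : H ≤ K := by
  induction l generalizing H with
  | nil => exact hl.le
  | cons x l ih => exact (le_adjoin H x).trans (ih hl.2)

theorem IsFreeComplement.exists_isFreeChain (hD : D.Finite) (h : IsFreeComplement D H K) :
    ∃ l, IsFreeChain K H l := by
  induction D, hD using Set.Finite.induction_on generalizing H with
  | empty => exact ⟨[], show H = K by simpa using h.1⟩
  | @insert x D hx _ ih =>
    obtain ⟨l, hl⟩ := ih (h.right_of_union (Set.disjoint_singleton_left.2 hx))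
    exact ⟨x :: l, h.left_of_union, hl⟩

end FreeChains

section WeightedChains

open FreeGroup hiding norm norm_eq_zero map map_mul map_inv map_one

variable {A : Type} [DecidableEq A] {G K : Subgroup (FreeGroup A)} {x : FreeGroup A}
  {l : List (FreeGroup A)} {R : ℕ}

/-- The total distance between consecutive members of a chain of subgroups, with decreasing
coefficients so that it drops when a pair of consecutive elements is improved. -/
noncomputable def chainWeight : Subgroup (FreeGroup A) → List (FreeGroup A) → ℕ
  | _, [] => 0
  | G, x :: l => (l.length + 1) * hullDist G x + chainWeight (adjoin G x) l

theorem IsImprovable.exists_chainWeight_lt {y : FreeGroup A} (hxy : IsImprovable G x y)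
    (hy : hullDist (adjoin G x) y = 0) (hl : IsFreeChain K (adjoin (adjoin G x) y) l) :
    ∃ l', IsFreeChain K G l' ∧ l'.length = (x :: y :: l).length ∧
      chainWeight G l' < chainWeight G (x :: y :: l) := by
  obtain ⟨x', y', ⟨hx', hy'⟩, hadj, hlt, hle⟩ := hxy
  refine ⟨x' :: y' :: l, ⟨hx', hy', hadj ▸ hl⟩, rfl, ?_⟩
  simp only [chainWeight, hadj, hy, List.length_cons]
  nlinarith

theorem IsFreeChain.embedsModulo_or_exists_chainWeight_lt (hl : IsFreeChain K G l)
    (h0 : ∀ x ∈ l.head?, hullDist G x ≠ 0) :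
    EmbedsModulo (hull G) G K ∨
      ∃ l', IsFreeChain K G l' ∧ l'.length = l.length ∧ chainWeight G l' < chainWeight G l := by
  induction l generalizing G with
  | nil => exact .inl fun _ _ _ hk _ ↦ hl ▸ hk
  | cons x l ih =>
    have hx : hullDist G x ≠ 0 := h0 x rfl
    by_cases hy : ∀ y ∈ l.head?, hullDist (adjoin G x) y ≠ 0
    · refine (ih hl.2 hy).imp ((embedsModulo_hull_adjoin hx).trans (le_adjoin G x)) ?_
      rintro ⟨l', hl', hlen, hlt⟩
      exact ⟨x :: l', ⟨hl.1, hl'⟩, by simp [hlen], by simpa [chainWeight, hlen] using hlt⟩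
    · obtain _ | ⟨y, l⟩ := l
      · simp at hy
      · replace hy : hullDist (adjoin G x) y = 0 := by simpa using hy
        have hxy : IsFreePair G x y := ⟨hl.1, hl.2.1⟩
        exact .inr ((hxy.isImprovable hx hy).exists_chainWeight_lt hy hl.2.2)

/-- Every vertex of the Stallings automaton of `G` is at distance at most `R` from the root. -/
def HullRadiusLE (G : Subgroup (FreeGroup A)) (R : ℕ) : Prop :=
  ∀ u ∈ hull G, ∃ g ∈ G, (g * u).norm ≤ R

theorem hullRadiusLE_adjoin (hR : HullRadiusLE G R) (hx : hullDist G x = 0) :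
    HullRadiusLE (adjoin G x) R := by
  obtain ⟨v, hv, hxv⟩ := hullDist_eq_zero_iff.1 hx
  refine hull_adjoin_subset ?_ (fun u hu ↦ ?_) hxv hv .refl
  · rintro g hg y ⟨k, hk, hky⟩
    exact ⟨k * g⁻¹, mul_mem hk (inv_mem hg), by simpa [mul_assoc] using hky⟩
  · obtain ⟨g, hg, hgu⟩ := hR u hu
    exact ⟨g, le_adjoin G x hg, hgu⟩

theorem HullRadiusLE.exists_norm_mul_mul_le (hR : HullRadiusLE G R) (hx : hullDist G x = 0) :
    ∃ g ∈ G, ∃ h ∈ G, (g * x * h).norm ≤ 2 * R := by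
  obtain ⟨v, hv, hxv⟩ := hullDist_eq_zero_iff.1 hx
  obtain ⟨g, hg, hgx⟩ := hR _ hxv
  obtain ⟨h, hh, hhv⟩ := hR _ hv
  refine ⟨g, hg, h⁻¹, inv_mem hh, ?_⟩
  calc (g * x * h⁻¹).norm = (g * (x * v) * (h * v)⁻¹).norm := by congr 1; group
    _ ≤ (g * (x * v)).norm + (h * v)⁻¹.norm := norm_mul_le ..
    _ ≤ 2 * R := by rw [norm_inv_eq]; omega

theorem IsFreeChain.exists_embedsModulo (hl : IsFreeChain K G l) (hR : HullRadiusLE G R) :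
    ∃ L D, IsFreeComplement D G L ∧ L ≤ K ∧ EmbedsModulo (hull L) L K ∧
      ∀ d ∈ D, d.norm ≤ 2 * R := by
  generalize hn : l.length = n
  induction n generalizing G l with
  | zero =>
    obtain rfl := List.length_eq_zero_iff.1 hn
    exact ⟨G, ∅, .empty G, hl.le, fun _ _ _ hk _ ↦ hl ▸ hk, by simp⟩
  | succ n ihn =>
  induction hw : chainWeight G l using Nat.strong_induction_on generalizing l with
  | _ w ihw =>
  subst hw
  by_cases h0 : ∀ x ∈ l.head?, hullDist G x ≠ 0
  · rcases hl.embedsModulo_or_exists_chainWeight_lt h0 with hGK | ⟨l', hl', hlen, hlt⟩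
    · exact ⟨G, ∅, .empty G, hl.le, hGK, by simp⟩
    · exact ihw _ hlt hl' (hlen.trans hn) rfl
  · obtain _ | ⟨x, l⟩ := l
    · simp at hn
    replace h0 : hullDist G x = 0 := by simpa using h0
    obtain ⟨g, hg, h, hh, hnorm⟩ := hR.exists_norm_mul_mul_le h0
    obtain ⟨L, D, hD, hLK, hL, hDR⟩ := ihn hl.2 (hullRadiusLE_adjoin hR h0) (by simpa using hn)
    have hx : IsFreeComplement {g * x * h} G (adjoin G x) :=
      adjoin_mul_mul hg hh ▸ hl.1.mul_mul hg hh
    refine ⟨L, {g * x * h} ∪ D, hx.trans hD, hLK, hL, ?_⟩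
    rintro d (rfl | hd)
    exacts [hnorm, hDR d hd]

end WeightedChains

section SchreierTransversals

open FreeGroup hiding norm norm_eq_zero map map_mul map_inv map_one

variable {A : Type} [DecidableEq A] {K : Subgroup (FreeGroup A)} {g v : FreeGroup A}
  {u : FreeGroup A → FreeGroup A}

/-- `u` maps every element to the representative of its right coset of `K`, for a system of
representatives that is closed under prefixes and consists of elements of minimal length. -/
structure IsSchreierTransversal (K : Subgroup (FreeGroup A)) (u : FreeGroup A → FreeGroup A) :
    Prop where
  apply_mul_left : ∀ k ∈ K, ∀ g, u (k * g) = u g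
  mul_inv_mem : ∀ g, g * (u g)⁻¹ ∈ K
  apply_mk : ∀ g p, p <+: (u g).toWord → u (mk p) = mk p
  norm_le : ∀ g, (u g).norm ≤ g.norm

theorem exists_wellFounded_append_right (B : Type) : ∃ r : List B → List B → Prop,
    WellFounded r ∧ Std.Trichotomous r ∧ (∀ s t, s.length < t.length → r s t) ∧
      ∀ s t q, r s t → r (s ++ q) (t ++ q) := by
  -- Comparing words from their last letter makes the order compatible with appending.
  obtain ⟨_, _⟩ := exists_wellFoundedLT B
  refine ⟨InvImage (List.Shortlex (· < ·)) List.reverse,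
    InvImage.wf _ (List.Shortlex.wf wellFounded_lt), ⟨fun s t hst hts ↦ ?_⟩,
    fun s t h ↦ .of_length_lt (by simpa using h), fun s t q h ↦ ?_⟩
  · exact List.reverse_injective (Std.Trichotomous.trichotomous _ _ hst hts)
  · simpa [InvImage] using List.Shortlex.append_left h q.reverse

theorem exists_isSchreierTransversal (K : Subgroup (FreeGroup A)) :
    ∃ u, IsSchreierTransversal K u := by
  obtain ⟨r, hwf, htri, hlen, happ⟩ := exists_wellFounded_append_right (A × Bool)
  let S (g : FreeGroup A) : Set (List (A × Bool)) := {w | mk w * g⁻¹ ∈ K}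
  have toWord_mem (g) : mk g.toWord * g⁻¹ ∈ K := by
    rw [mk_toWord, mul_inv_cancel]; exact one_mem K
  let W (g : FreeGroup A) : List (A × Bool) := hwf.min (S g) ⟨_, toWord_mem g⟩
  have W_mem (g) : mk (W g) * g⁻¹ ∈ K := hwf.min_mem (S g) _
  have not_lt_W {g w} (hw : mk w * g⁻¹ ∈ K) : ¬ r w (W g) := hwf.not_lt_min (S g) hw
  have toWord_mk_W (g) : (mk (W g)).toWord = W g := by
    have hred : Red (W g) (mk (W g)).toWord := by rw [toWord_mk]; exact reduce.red
    refine hred.sublist.eq_of_length_le (not_lt.1 fun hlt ↦ ?_)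
    exact not_lt_W (by rw [mk_toWord]; exact W_mem g) (hlen _ _ hlt)
  refine ⟨fun g ↦ mk (W g), fun k hk g ↦ ?_, fun g ↦ ?_, fun g p hp ↦ ?_, fun g ↦ ?_⟩
  · have hS : S (k * g) = S g := by
      ext w
      simp only [S, Set.mem_ofPred_eq, mul_inv_rev, ← mul_assoc]
      exact K.mul_mem_cancel_right (inv_mem hk)
    simp only [W, hS]
  · simpa using inv_mem (W_mem g)
  · rw [toWord_mk_W] at hp
    obtain ⟨q, hpq⟩ := hp
    have hlt : ¬ r (W (mk p)) p := fun hlt ↦ by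
      refine not_lt_W ?_ (hpq ▸ happ _ _ q hlt)
      have hmul := mul_mem (W_mem (mk p)) (W_mem g)
      rwa [← hpq, ← mul_mk, ← mul_assoc, ← mul_assoc, inv_mul_cancel_right, mul_mk] at hmul
    have hgt : ¬ r p (W (mk p)) := not_lt_W (by rw [mul_inv_cancel]; exact one_mem K)
    exact congrArg mk (htri.trichotomous _ _ hlt hgt)
  · rw [FreeGroup.norm, toWord_mk_W]
    exact not_lt.1 fun hlt ↦ not_lt_W (toWord_mem g) (hlen _ _ hlt)

namespace IsSchreierTransversal

theorem apply_one (hu : IsSchreierTransversal K u) : u 1 = 1 :=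
  hu.apply_mk 1 [] List.nil_prefix

theorem apply_of_mem (hu : IsSchreierTransversal K u) (hg : g ∈ K) : u g = 1 := by
  simpa [hu.apply_one] using hu.apply_mul_left g hg 1

theorem apply_apply (hu : IsSchreierTransversal K u) (g : FreeGroup A) : u (u g) = u g := by
  simpa only [mk_toWord] using hu.apply_mk g _ (List.prefix_refl _)

theorem apply_apply_mul (hu : IsSchreierTransversal K u) (g h : FreeGroup A) :
    u (u g * h) = u (g * h) := by
  have := hu.apply_mul_left _ (hu.mul_inv_mem g) (u g * h)
  rw [← this]; group

theorem apply_of_mem_interval (hu : IsSchreierTransversal K u) (hv : v ∈ interval 1 (u g)) :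
    u v = v := by
  have happ := toWord_eq_append_of_mem_interval hv
  simp only [inv_one, one_mul] at happ
  simpa only [mk_toWord] using hu.apply_mk g v.toWord (happ ▸ List.prefix_append _ _)

theorem norm_le_of_hullRadiusLE {R : ℕ} (hu : IsSchreierTransversal K u) (hR : HullRadiusLE K R)
    (hg : g ∈ hull K) : (u g).norm ≤ R := by
  obtain ⟨k, hk, hkg⟩ := hR g hg
  rw [← hu.apply_mul_left k hk]
  exact (hu.norm_le _).trans hkg

end IsSchreierTransversal

end SchreierTransversals

section PathProducts

open FreeGroup hiding norm norm_eq_zero map map_mul map_inv map_one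

variable {A Z : Type} [Group Z] {β : FreeGroup A → A → Z} {h : FreeGroup A}

/-- The product of the labels along the path from `1` to `g` in the Cayley tree, the edge from `y`
to `y * of a` being labelled by `β y a`. -/
def pathProduct (β : FreeGroup A → A → Z) (g : FreeGroup A) : Z :=
  (lift (fun a ↦ (⟨fun y ↦ β y⁻¹ a, of a⟩ : (FreeGroup A → Z) ⋊[mulAutArrow] FreeGroup A)) g).left 1

theorem pathProduct_one (β : FreeGroup A → A → Z) : pathProduct β 1 = 1 := by
  simp [pathProduct]

theorem pathProduct_mul_of (β : FreeGroup A → A → Z) (g : FreeGroup A) (a : A) :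
    pathProduct β (g * of a) = pathProduct β g * β g a := by
  let σ : FreeGroup A →* (FreeGroup A → Z) ⋊[mulAutArrow] FreeGroup A :=
    lift fun a ↦ ⟨fun y ↦ β y⁻¹ a, of a⟩
  have hσ : SemidirectProduct.rightHom.comp σ = MonoidHom.id _ := by ext; simp [σ]
  have hright : (σ g).right = g := DFunLike.congr_fun hσ g
  change (σ (g * of a)).left 1 = (σ g).left 1 * β g a
  rw [map_mul, SemidirectProduct.mul_left, Pi.mul_apply, hright, mulAutArrow_apply_apply]
  change (σ g).left 1 * (σ (of a)).left (g⁻¹ * 1) = _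
  simp [σ]

theorem apply_eq_apply_one_of_mul_of {W : Type} {F : FreeGroup A → W}
    (hF : ∀ g a, F (g * of a) = F g) (g : FreeGroup A) : F g = F 1 := by
  suffices hmul : ∀ x, F (x * g) = F x by simpa using hmul 1
  induction g using FreeGroup.induction_on with
  | C1 => simp
  | of a => exact fun x ↦ hF x a
  | inv_of a _ => exact fun x ↦ by simpa using (hF (x * (of a)⁻¹) a).symm
  | mul x y hx hy => exact fun z ↦ by rw [← mul_assoc, hy, hx]

theorem eq_mul_pathProduct {f : FreeGroup A → Z} (hf : ∀ g a, f (g * of a) = f g * β g a)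
    (g : FreeGroup A) : f g = f 1 * pathProduct β g := by
  have hconst := apply_eq_apply_one_of_mul_of (F := fun g ↦ f g * (pathProduct β g)⁻¹)
    (fun g a ↦ by rw [hf, pathProduct_mul_of]; group) g
  rw [pathProduct_one, inv_one, mul_one] at hconst
  rw [← hconst, inv_mul_cancel_right]

theorem pathProduct_mul (hβ : ∀ g a, β (h * g) a = β g a) (g : FreeGroup A) :
    pathProduct β (h * g) = pathProduct β h * pathProduct β g := by
  simpa using eq_mul_pathProduct (f := fun g ↦ pathProduct β (h * g)) (β := β)
    (fun g a ↦ by rw [← mul_assoc, pathProduct_mul_of, hβ]) g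

end PathProducts

section SchreierGenerators

open FreeGroup hiding norm norm_eq_zero map map_mul map_inv map_one

variable {A : Type} {u : FreeGroup A → FreeGroup A} {e : FreeGroup A × A}

/-- The edges of the Schreier graph outside of the spanning tree defined by the transversal `u`. -/
def schreierEdges (u : FreeGroup A → FreeGroup A) : Set (FreeGroup A × A) :=
  {e | u e.1 = e.1 ∧ u (e.1 * of e.2) ≠ e.1 * of e.2}

/-- The Schreier generator associated with an edge of the Schreier graph. -/
def schreierGen (u : FreeGroup A → FreeGroup A) (e : FreeGroup A × A) : FreeGroup A :=
  e.1 * of e.2 * (u (e.1 * of e.2))⁻¹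

/-- The evaluation of words in the Schreier generators. -/
def schreierHom (u : FreeGroup A → FreeGroup A) : FreeGroup (schreierEdges u) →* FreeGroup A :=
  lift fun e ↦ schreierGen u e

open Classical in
/-- The contribution of an edge of the Schreier graph to a word in the Schreier generators. -/
noncomputable def schreierLabel (u : FreeGroup A → FreeGroup A) (e : FreeGroup A × A) :
    FreeGroup (schreierEdges u) :=
  if h : e ∈ schreierEdges u then of ⟨e, h⟩ else 1

/-- The Reidemeister–Schreier rewriting of `g`. -/
noncomputable def schreierWord (u : FreeGroup A → FreeGroup A) (g : FreeGroup A) :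
    FreeGroup (schreierEdges u) :=
  pathProduct (fun y a ↦ schreierLabel u (u y, a)) g

theorem schreierWord_one (u : FreeGroup A → FreeGroup A) : schreierWord u 1 = 1 :=
  pathProduct_one _

theorem schreierWord_mul_of (u : FreeGroup A → FreeGroup A) (g : FreeGroup A) (a : A) :
    schreierWord u (g * of a) = schreierWord u g * schreierLabel u (u g, a) :=
  pathProduct_mul_of _ g a

theorem schreierWord_mul_of_of_apply_eq {g : FreeGroup A} {a : A} (hg : u g = g)
    (hga : u (g * of a) = g * of a) :
    schreierWord u (g * of a) = schreierWord u g := by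
  have hlabel : schreierLabel u (u g, a) = 1 := dif_neg (by simp [schreierEdges, hg, hga])
  rw [schreierWord_mul_of, hlabel, mul_one]

namespace IsSchreierTransversal

variable [DecidableEq A] {K L : Subgroup (FreeGroup A)} {k g v : FreeGroup A}

theorem schreierGen_mem (hu : IsSchreierTransversal K u) (e : FreeGroup A × A) :
    schreierGen u e ∈ K :=
  hu.mul_inv_mem _

theorem schreierHom_schreierWord (hu : IsSchreierTransversal K u) (g : FreeGroup A) :
    schreierHom u (schreierWord u g) = g * (u g)⁻¹ := by
  have hconst := apply_eq_apply_one_of_mul_of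
    (F := fun g ↦ g * (u g)⁻¹ * (schreierHom u (schreierWord u g))⁻¹) ?_ g
  · simp only [hu.apply_one, schreierWord_one, map_one, inv_one, mul_one] at hconst
    exact (mul_inv_eq_one.1 hconst).symm
  · intro g a
    simp only [schreierWord_mul_of, map_mul, mul_inv_rev]
    have hlabel : schreierHom u (schreierLabel u (u g, a)) = u g * of a * (u (g * of a))⁻¹ := by
      rw [schreierLabel, ← hu.apply_apply_mul]
      split_ifs with he
      · simp [schreierHom, schreierGen]
      · have hfix : u (u g * of a) = u g * of a := by simpa [schreierEdges, hu.apply_apply] using he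
        rw [hfix, map_one, mul_inv_cancel]
    rw [hlabel]
    group

theorem schreierWord_mul (hu : IsSchreierTransversal K u) (hk : k ∈ K) (g : FreeGroup A) :
    schreierWord u (k * g) = schreierWord u k * schreierWord u g :=
  pathProduct_mul (fun g a ↦ by rw [hu.apply_mul_left k hk]) g

theorem schreierWord_apply (hu : IsSchreierTransversal K u) (g : FreeGroup A) :
    schreierWord u (u g) = 1 := by
  suffices h : ∀ p, p <+: (u g).toWord → schreierWord u (FreeGroup.mk p) = 1 by
    simpa only [mk_toWord] using h _ (List.prefix_refl _)
  intro p hp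
  induction p using List.reverseRecOn with
  | nil => exact schreierWord_one u
  | append_singleton p ab ih =>
    have hp' := (List.prefix_append p [ab]).trans hp
    have hfix := hu.apply_mk g p hp'
    have hfix' := hu.apply_mk g _ hp
    rw [← ih hp']
    obtain ⟨a, _ | _⟩ := ab
    · have hmul : FreeGroup.mk p = FreeGroup.mk (p ++ [(a, false)]) * of a := by
        rw [← mul_mk]; exact (inv_mul_cancel_right (FreeGroup.mk p) (of a)).symm
      rw [hmul, schreierWord_mul_of_of_apply_eq hfix' (by rw [← hmul, hfix])]
    · have hmul : FreeGroup.mk (p ++ [(a, true)]) = FreeGroup.mk p * of a := mul_mk.symm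
      rw [hmul, schreierWord_mul_of_of_apply_eq hfix (by rw [← hmul, hfix'])]

theorem schreierWord_schreierGen (hu : IsSchreierTransversal K u) (e : schreierEdges u) :
    schreierWord u (schreierGen u e) = of e := by
  have hword : schreierWord u e.1.1 = 1 := by rw [← e.2.1, hu.schreierWord_apply]
  have hlabel : schreierLabel u (u e.1.1, e.1.2) = of e := by
    rw [e.2.1]; exact dif_pos e.2
  calc schreierWord u (schreierGen u e)
      = schreierWord u (schreierGen u e * u (e.1.1 * of e.1.2)) := by
        rw [hu.schreierWord_mul (hu.schreierGen_mem e), hu.schreierWord_apply, mul_one]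
    _ = of e := by
        rw [schreierGen, inv_mul_cancel_right, schreierWord_mul_of, hword, hlabel, one_mul]

theorem schreierHom_mem (hu : IsSchreierTransversal K u) (w : FreeGroup (schreierEdges u)) :
    schreierHom u w ∈ K := by
  suffices h : (schreierHom u).range ≤ K from h ⟨w, rfl⟩
  rw [schreierHom, range_lift_eq_closure, Subgroup.closure_le]
  rintro _ ⟨e, rfl⟩
  exact hu.schreierGen_mem e

theorem schreierWord_schreierHom (hu : IsSchreierTransversal K u)
    (w : FreeGroup (schreierEdges u)) : schreierWord u (schreierHom u w) = w := by
  let ψ : K →* FreeGroup (schreierEdges u) :=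
    MonoidHom.mk' (fun k ↦ schreierWord u k) fun k l ↦ hu.schreierWord_mul k.2 l
  have hψ : ψ.comp ((schreierHom u).codRestrict K hu.schreierHom_mem) = MonoidHom.id _ := by
    ext e
    simpa [ψ, schreierHom] using hu.schreierWord_schreierGen e
  exact DFunLike.congr_fun hψ w

theorem schreierHom_injective (hu : IsSchreierTransversal K u) : Injective (schreierHom u) :=
  LeftInverse.injective hu.schreierWord_schreierHom

theorem schreierHom_schreierWord_of_mem (hu : IsSchreierTransversal K u) (hk : k ∈ K) :
    schreierHom u (schreierWord u k) = k := by
  rw [hu.schreierHom_schreierWord, hu.apply_of_mem hk, inv_one, mul_one]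

theorem range_schreierHom (hu : IsSchreierTransversal K u) : (schreierHom u).range = K :=
  le_antisymm (by rintro _ ⟨w, rfl⟩; exact hu.schreierHom_mem w)
    fun _ hk ↦ ⟨_, hu.schreierHom_schreierWord_of_mem hk⟩

theorem closure_schreierGen (hu : IsSchreierTransversal K u) :
    Subgroup.closure (schreierGen u '' schreierEdges u) = K := by
  rw [← hu.range_schreierHom, schreierHom, range_lift_eq_closure, Set.image_eq_range]

theorem mem_hull_of_mem_schreierEdges (hu : IsSchreierTransversal K u) (he : e ∈ schreierEdges u) :
    e.1 ∈ hull K ∧ e.1 * of e.2 ∈ hull K := by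
  obtain ⟨v, a⟩ := e
  obtain ⟨hv, hva⟩ : u v = v ∧ u (v * of a) ≠ v * of a := he
  let k := schreierGen u (v, a)
  have hk : k ∈ K := hu.schreierGen_mem _
  have hedge : treeDist v (v * of a) = 1 := treeDist_eq_one_iff.2 ⟨a, .inl rfl⟩
  have hku : k * u (v * of a) = v * of a := inv_mul_cancel_right _ _
  have hfrom : treeDist 1 (v * of a) = treeDist 1 v + 1 := by
    refine (treeDist_eq_add_one_or 1 hedge).resolve_right fun h ↦ hva ?_
    refine hu.apply_of_mem_interval (g := v) ?_
    rw [hv, mem_interval, treeDist_comm _ v]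
    omega
  have hto : treeDist k v = treeDist k (v * of a) + 1 := by
    refine (treeDist_eq_add_one_or k hedge).resolve_left fun h ↦ hva ?_
    have hfix : u (k⁻¹ * v) = k⁻¹ * v := by
      refine hu.apply_of_mem_interval (g := v * of a) ?_
      rw [← inv_mul_eq_iff_eq_mul.2 hku.symm, ← inv_mul_cancel k, mul_mem_interval_mul,
        mem_interval]
      omega
    rw [hu.apply_mul_left _ (inv_mem hk), hv, right_eq_mul, inv_eq_one] at hfix
    exact (mul_inv_eq_one.1 hfix).symm
  have hint := mem_interval_of_edge_directed hfrom hedge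
    (by rwa [treeDist_comm v, treeDist_comm _ k])
  exact ⟨⟨1, one_mem K, k, hk, hint.1⟩, ⟨1, one_mem K, k, hk, hint.2⟩⟩

theorem norm_schreierGen_le {R : ℕ} (hu : IsSchreierTransversal K u) (hR : HullRadiusLE K R)
    (he : e ∈ schreierEdges u) : (schreierGen u e).norm ≤ 1 + 2 * R := by
  obtain ⟨hv, hva⟩ := hu.mem_hull_of_mem_schreierEdges he
  have hv' := hu.norm_le_of_hullRadiusLE hR hv
  have hva' := hu.norm_le_of_hullRadiusLE hR hva
  have hmul := norm_mul_le (e.1 * of e.2) (u (e.1 * of e.2))⁻¹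
  have hmul' := norm_mul_le e.1 (of e.2)
  rw [norm_inv_eq] at hmul
  rw [norm_of] at hmul'
  rw [he.1] at hv'
  rw [schreierGen]
  omega

end IsSchreierTransversal

end SchreierGenerators

section DistinctLabels

open FreeGroup hiding norm norm_eq_zero map map_mul map_inv map_one

variable {A : Type} [DecidableEq A] {L : Subgroup (FreeGroup A)} {u : FreeGroup A → FreeGroup A}
  {s v w : FreeGroup A} {a : A}

/-- Distinct edges of the Stallings automaton of `L` have distinct labels. -/
def HasDistinctLabels (L : Subgroup (FreeGroup A)) : Prop :=
  ∀ a, ∀ s ∈ hull L, s * of a ∈ hull L → ∀ t ∈ hull L, t * of a ∈ hull L → t * s⁻¹ ∈ L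

/-- The basis elements that label no edge outside of the spanning tree. -/
def treeLetters (u : FreeGroup A → FreeGroup A) : Set (FreeGroup A) :=
  of '' {a | ∀ v, (v, a) ∉ schreierEdges u}

namespace HasDistinctLabels

theorem eq_of_mem_schreierEdges (hL : HasDistinctLabels L) (hu : IsSchreierTransversal L u)
    (hs : s ∈ hull L) (hsa : s * of a ∈ hull L) (hus : u s = s) (hv : (v, a) ∈ schreierEdges u) :
    v = s := by
  obtain ⟨hvL, hvaL⟩ := hu.mem_hull_of_mem_schreierEdges hv
  have huv := hu.apply_mul_left _ (hL a s hs hsa v hvL hvaL) s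
  rw [inv_mul_cancel_right, hus] at huv
  rw [← huv]
  exact hv.1.symm

theorem of_mem_treeLetters (hL : HasDistinctLabels L) (hu : IsSchreierTransversal L u)
    (hs : s ∈ hull L) (hsa : s * of a ∈ hull L) (hus : u s = s) (husa : u (s * of a) = s * of a) :
    of a ∈ treeLetters u := by
  refine ⟨a, fun v hv ↦ ?_, rfl⟩
  obtain rfl := hL.eq_of_mem_schreierEdges hu hs hsa hus hv
  exact hv.2 husa

theorem mem_closure_treeLetters (hL : HasDistinctLabels L) (hu : IsSchreierTransversal L u)
    (hv : v ∈ hull L) (huv : u v = v) : v ∈ Subgroup.closure (treeLetters u) := by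
  induction hn : treeDist 1 v generalizing v with
  | zero => exact treeDist_eq_zero.1 hn ▸ one_mem _
  | succ n ih =>
    obtain ⟨s, hsv, hdist⟩ := exists_treeDist_eq_one_of_ne (u := 1) (v := v)
      fun h ↦ by simp [h] at hn
    have hs : s ∈ interval 1 v := by rw [mem_interval]; omega
    have hus : u s = s := hu.apply_of_mem_interval (g := v) (huv.symm ▸ hs)
    have hsL : s ∈ hull L := interval_subset_hull (one_mem_hull L) hv hs
    have hsD := ih hsL hus (by omega)
    obtain ⟨a, rfl | rfl⟩ := treeDist_eq_one_iff.1 hsv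
    · exact mul_mem hsD (Subgroup.subset_closure (hL.of_mem_treeLetters hu hsL hv hus huv))
    · have ha := Subgroup.subset_closure (hL.of_mem_treeLetters hu hv hsL huv hus)
      simpa using mul_mem hsD (inv_mem ha)

theorem mem_closure_treeLetters_of_mem_schreierEdges (hL : HasDistinctLabels L)
    (hu : IsSchreierTransversal L u) (he : (v, a) ∈ schreierEdges u) :
    v ∈ Subgroup.closure (treeLetters u) ∧
      u (v * of a) ∈ Subgroup.closure (treeLetters u) := by
  obtain ⟨hv, hva⟩ := hu.mem_hull_of_mem_schreierEdges he
  refine ⟨hL.mem_closure_treeLetters hu hv he.1,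
    hL.mem_closure_treeLetters hu ?_ (hu.apply_apply _)⟩
  have hmul := mul_mem_hull (inv_mem (hu.mul_inv_mem (v * of a))) hva
  rwa [mul_inv_rev, inv_inv, inv_mul_cancel_right] at hmul

theorem sup_closure_treeLetters (hL : HasDistinctLabels L) (hu : IsSchreierTransversal L u) :
    L ⊔ Subgroup.closure (treeLetters u) = ⊤ := by
  rw [eq_top_iff, ← closure_range_of A, Subgroup.closure_le]
  rintro _ ⟨a, rfl⟩
  by_cases ha : ∀ v, (v, a) ∉ schreierEdges u
  · exact Subgroup.mem_sup_right (Subgroup.subset_closure ⟨a, ha, rfl⟩)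
  · push Not at ha
    obtain ⟨v, hv⟩ := ha
    obtain ⟨hvD, hvaD⟩ := hL.mem_closure_treeLetters_of_mem_schreierEdges hu hv
    have ha : of a = v⁻¹ * schreierGen u (v, a) * u (v * of a) := by rw [schreierGen]; group
    rw [ha]
    exact mul_mem (mul_mem (Subgroup.mem_sup_right (inv_mem hvD))
      (Subgroup.mem_sup_left (hu.schreierGen_mem _))) (Subgroup.mem_sup_right hvaD)

theorem exists_eq_of_mem_schreierEdges (hL : HasDistinctLabels L)
    (hu : IsSchreierTransversal L u) {W : Type} (b : A → W) (c : FreeGroup A × A → W) :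
    ∃ β : A → W, (∀ a, (∀ v, (v, a) ∉ schreierEdges u) → β a = b a) ∧
      ∀ e ∈ schreierEdges u, β e.2 = c e := by
  have exists_value (a) : ∃ x : W, ((∀ v, (v, a) ∉ schreierEdges u) → x = b a) ∧
      ∀ v, (v, a) ∈ schreierEdges u → x = c (v, a) := by
    by_cases ha : ∀ v, (v, a) ∉ schreierEdges u
    · exact ⟨b a, fun _ ↦ rfl, fun v hv ↦ absurd hv (ha v)⟩
    · push Not at ha
      obtain ⟨v, hv⟩ := ha
      refine ⟨c (v, a), fun h ↦ absurd hv (h v), fun v' hv' ↦ ?_⟩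
      obtain ⟨hvL, hvaL⟩ := hu.mem_hull_of_mem_schreierEdges hv
      rw [hL.eq_of_mem_schreierEdges hu hvL hvaL hv.1 hv']
  choose β hβb hβc using exists_value
  exact ⟨β, hβb, fun e he ↦ hβc e.2 e.1 he⟩

theorem isFreeComplement_treeLetters (hL : HasDistinctLabels L) (hu : IsSchreierTransversal L u) :
    IsFreeComplement (treeLetters u) L ⊤ := by
  refine ⟨hL.sup_closure_treeLetters hu, fun W _ f w ↦ ?_⟩
  let ψ : FreeGroup A →* W := lift fun a ↦ w (of a)
  obtain ⟨β, hβD, hβ⟩ := hL.exists_eq_of_mem_schreierEdges hu (fun a ↦ w (of a)) fun e ↦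
    (ψ e.1)⁻¹ * f ⟨schreierGen u e, hu.schreierGen_mem e⟩ * ψ (u (e.1 * of e.2))
  let φ : FreeGroup A →* W := lift β
  have hφψ : Set.EqOn φ ψ (Subgroup.closure (treeLetters u)) := by
    refine MonoidHom.eqOn_closure ?_
    rintro _ ⟨a, ha, rfl⟩
    simp [φ, ψ, hβD a ha]
  have hφf : (φ.comp (Subgroup.subtype ⊤)).comp (Subgroup.inclusion le_top) = f := by
    refine hom_eq_of_eqOn_generators hu.closure_schreierGen le_top ?_
    rintro _ - _ ⟨⟨v, a⟩, he, rfl⟩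
    obtain ⟨hv, hva⟩ := hL.mem_closure_treeLetters_of_mem_schreierEdges hu he
    have hφa : φ (of a) = β a := by simp [φ]
    change φ (v * of a * (u (v * of a))⁻¹) = _
    rw [map_mul, map_mul, map_inv, hφψ hv, hφψ hva, hφa, hβ _ he]
    group
  refine ⟨φ.comp (Subgroup.subtype ⊤), fun g hg _ ↦ DFunLike.congr_fun hφf ⟨g, hg⟩, ?_⟩
  rintro _ - ⟨a, ha, rfl⟩
  simp [φ, hβD a ha]

theorem exists_isFreeComplement (hL : HasDistinctLabels L) :
    ∃ D ⊆ Set.range of, IsFreeComplement D L ⊤ := by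
  obtain ⟨u, hu⟩ := exists_isSchreierTransversal L
  exact ⟨_, Set.image_subset_range _ _, hL.isFreeComplement_treeLetters hu⟩

end HasDistinctLabels

end DistinctLabels

section Contraction

open Relation
open FreeGroup hiding norm norm_eq_zero map map_mul map_inv map_one

variable {A : Type} {K L : Subgroup (FreeGroup A)}
  {u : FreeGroup A → FreeGroup A} {e : schreierEdges u} {s : FreeGroup (schreierEdges u)}
  {y z : FreeGroup A} {a : A}

theorem schreierLabel_eq_one_or (u : FreeGroup A → FreeGroup A) (f : FreeGroup A × A) :
    schreierLabel u f = 1 ∨ ∃ h, schreierLabel u f = of ⟨f, h⟩ := by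
  unfold schreierLabel
  split_ifs with h
  exacts [.inr ⟨h, rfl⟩, .inl rfl]

theorem schreierLabel_eq_of_iff {f : FreeGroup A × A} : schreierLabel u f = of e ↔ f = e := by
  refine ⟨fun h ↦ ?_, ?_⟩
  · rcases schreierLabel_eq_one_or u f with h1 | ⟨hf, h1⟩
    · exact absurd (h1.symm.trans h).symm (of_ne_one e)
    · rw [h1] at h
      exact congrArg Subtype.val (of_injective h)
  · rintro rfl
    exact dif_pos e.2

theorem schreierLabel_ne_inv_of (f : FreeGroup A × A) : schreierLabel u f ≠ (of e)⁻¹ := by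
  classical
  intro h
  have hword := congrArg toWord h
  rcases schreierLabel_eq_one_or u f with h1 | ⟨_, h1⟩ <;> simp [h1, invRev] at hword

variable [DecidableEq A]

/-- The edges of the Cayley tree of the free group on the Schreier edges that are images of edges
of the hull of `L` under the rewriting map. -/
def HullEdge (u : FreeGroup A → FreeGroup A) (L : Subgroup (FreeGroup A))
    (s t : FreeGroup (schreierEdges u)) : Prop :=
  treeDist s t = 1 ∧ ∃ y ∈ hull L, ∃ z ∈ hull L,
    treeDist y z = 1 ∧ schreierWord u y = s ∧ schreierWord u z = t

instance : Std.Symm (HullEdge u L) where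
  symm s t := by
    rintro ⟨hst, y, hy, z, hz, hyz, hys, hzt⟩
    exact ⟨by rwa [treeDist_comm], z, hz, y, hy, by rwa [treeDist_comm], hzt, hys⟩

theorem treeDist_schreierWord_le (h : treeDist y z = 1) :
    treeDist (schreierWord u y) (schreierWord u z) ≤ 1 := by
  have norm_label (f) : (schreierLabel u f).norm ≤ 1 := by
    rcases schreierLabel_eq_one_or u f with h1 | ⟨_, h1⟩ <;> simp [h1]
  obtain ⟨a, rfl | rfl⟩ := treeDist_eq_one_iff.1 h
  · simpa [treeDist, schreierWord_mul_of] using norm_label _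
  · rw [treeDist_comm]
    simpa [treeDist, schreierWord_mul_of] using norm_label _

theorem reflTransGen_hullEdge (h : Linked (hull L) y z) :
    ReflTransGen (HullEdge u L) (schreierWord u y) (schreierWord u z) := by
  induction h with
  | refl => exact .refl
  | @tail v w _ hvw ih =>
    obtain ⟨hv, hw, hdist⟩ := hvw
    rcases Nat.le_one_iff_eq_zero_or_eq_one.1 (treeDist_schreierWord_le (u := u) hdist) with h | h
    · rwa [← treeDist_eq_zero.1 h]
    · exact ih.tail ⟨h, v, hv, w, hw, hdist, rfl, rfl⟩

theorem interval_subset_of_reflTransGen {r : FreeGroup A → FreeGroup A → Prop}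
    (hr : ∀ v w, r v w → treeDist v w = 1) (h : ReflTransGen r y z) :
    interval y z ⊆ {v | ReflTransGen r y v} := by
  refine Linked.interval_subset ?_ h
  induction h with
  | refl => exact .refl
  | @tail v w hv hvw ih => exact ih.tail ⟨hv, hv.tail hvw, hr v w hvw⟩

namespace IsSchreierTransversal

theorem reflTransGen_of_mem_hull_comap (hu : IsSchreierTransversal K u)
    (hs : s ∈ hull (L.comap (schreierHom u))) : ReflTransGen (HullEdge u L) 1 s := by
  have reach (g) (hg : schreierHom u g ∈ L) : ReflTransGen (HullEdge u L) 1 g := by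
    simpa [hu.schreierWord_schreierHom, schreierWord_one] using
      reflTransGen_hullEdge (u := u) (linked_hull_one (subset_hull L hg))
  obtain ⟨g, hg, h, hh, hs⟩ := hs
  have hgh := (ReflTransGen.stdSymm.symm _ _ (reach g hg)).trans (reach h hh)
  exact (reach g hg).trans (interval_subset_of_reflTransGen (fun _ _ h ↦ h.1) hgh hs)

theorem exists_mem_hull_schreierWord_eq (hu : IsSchreierTransversal K u)
    (hs : s ∈ hull (L.comap (schreierHom u))) (hse : s * of e ∈ hull (L.comap (schreierHom u))) :
    ∃ y ∈ hull L, y * of e.1.2 ∈ hull L ∧ u y = e.1.1 ∧ schreierWord u y = s := by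
  have hpath := (ReflTransGen.stdSymm.symm _ _ (hu.reflTransGen_of_mem_hull_comap hs)).trans
    (hu.reflTransGen_of_mem_hull_comap hse)
  have hdist : treeDist s (s * of e) = 1 := treeDist_eq_one_iff.2 ⟨e, .inl rfl⟩
  obtain ⟨-, y, hy, z, hz, hyz, rfl, hze⟩ :=
    rel_of_edge_mem_geodesic (fun _ _ h ↦ h.1) hpath hdist (by simp [hdist])
  obtain ⟨a, rfl | rfl⟩ := treeDist_eq_one_iff.1 hyz
  · rw [schreierWord_mul_of, mul_right_inj, schreierLabel_eq_of_iff] at hze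
    exact ⟨y, hy, by rwa [← hze], by rw [← hze], rfl⟩
  · rw [schreierWord_mul_of, mul_assoc, left_eq_mul, mul_eq_one_iff_eq_inv] at hze
    exact absurd hze (schreierLabel_ne_inv_of _)

theorem hasDistinctLabels_comap (hu : IsSchreierTransversal K u)
    (hL : EmbedsModulo (hull L) L K) : HasDistinctLabels (L.comap (schreierHom u)) := by
  intro e s hs hse t ht hte
  obtain ⟨y, hy, -, huy, rfl⟩ := hu.exists_mem_hull_schreierWord_eq hs hse
  obtain ⟨z, hz, -, huz, rfl⟩ := hu.exists_mem_hull_schreierWord_eq ht hte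
  have hzy : z * y⁻¹ ∈ K := by
    simpa [huy, huz] using mul_mem (hu.mul_inv_mem z) (inv_mem (hu.mul_inv_mem y))
  have hzyL : z * y⁻¹ ∈ L := hL y hy _ hzy (by simpa using hz)
  have hword := hu.schreierWord_mul hzy y
  rw [inv_mul_cancel_right] at hword
  rwa [hword, mul_inv_cancel_right, Subgroup.mem_comap, hu.schreierHom_schreierWord_of_mem hzy]

end IsSchreierTransversal

theorem EmbedsModulo.exists_isFreeComplement {R : ℕ} (hLK : L ≤ K)
    (hL : EmbedsModulo (hull L) L K) (hR : HullRadiusLE K R) :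
    ∃ D, IsFreeComplement D L K ∧ ∀ d ∈ D, d.norm ≤ 1 + 2 * R := by
  obtain ⟨u, hu⟩ := exists_isSchreierTransversal K
  obtain ⟨D, hD, hDL⟩ := (hu.hasDistinctLabels_comap hL).exists_isFreeComplement
  have hmap := hDL.map hu.schreierHom_injective
  rw [Subgroup.map_comap_eq_self (hu.range_schreierHom ▸ hLK), ← MonoidHom.range_eq_map,
    hu.range_schreierHom] at hmap
  refine ⟨_, hmap, ?_⟩
  rintro _ ⟨d, hd, rfl⟩
  obtain ⟨e, rfl⟩ := hD hd
  simpa [schreierHom] using hu.norm_schreierGen_le hR e.2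

end Contraction

section Automata

open FreeGroup hiding norm norm_eq_zero map map_mul map_inv map_one

variable {A : Type} {M : Autom A} {v w : List (Ltr A)} {p q r : M.Q}

theorem isReducedWord_of_isReduced (h : IsReduced w) : IsReducedWord w := by
  rintro u v a b rfl
  exact h.not_step Red.Step.not

namespace Autom

theorem path_append : M.Path p (v ++ w) r ↔ ∃ q, M.Path p v q ∧ M.Path q w r := by
  induction v generalizing p with
  | nil =>
    refine ⟨fun h ↦ ⟨p, .nil p, h⟩, ?_⟩
    rintro ⟨_, ⟨⟩, h⟩
    exact h
  | cons a v ih =>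
    constructor
    · rintro (_ | ⟨he, h⟩)
      obtain ⟨s, hs, hsr⟩ := ih.1 h
      exact ⟨s, .cons he hs, hsr⟩
    · rintro ⟨q, _ | ⟨he, h⟩, hq⟩
      exact .cons he (ih.2 ⟨q, h, hq⟩)

theorem Dual.path_invRev (hM : M.Dual) (h : M.Path p w q) : M.Path q (invRev w) p := by
  induction h with
  | nil => exact .nil _
  | @cons p q r a w he _ ih =>
    rw [invRev_cons]
    exact path_append.2 ⟨q, ih, .cons ((hM p a q).1 he) (.nil p)⟩

namespace IsInv

theorem path_of_step (hM : M.IsInv) (h : M.Path p v q) (hvw : Red.Step v w) : M.Path p w q := by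
  obtain ⟨hdet, -, hdual⟩ := hM
  obtain @⟨v₁, v₂, a, b⟩ := hvw
  obtain ⟨s, hps, _ | ⟨he, _ | ⟨he', htq⟩⟩⟩ := path_append.1 h
  obtain rfl := hdet _ _ _ _ he' ((hdual _ _ _).1 he)
  exact path_append.2 ⟨_, hps, htq⟩

theorem path_of_red (hM : M.IsInv) (h : M.Path p v q) (hvw : Red v w) : M.Path p w q := by
  induction hvw with
  | refl => exact h
  | tail _ hstep ih => exact hM.path_of_step ih hstep

end IsInv

theorem exists_path_length_le_diam [Finite M.Q] (hw : IsReduced w) (h : M.Path M.q0 w q) :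
    ∃ v, M.Path M.q0 v q ∧ v.length ≤ M.diam := by
  have hne : {n | ∃ v, IsReducedWord v ∧ v.length = n ∧ M.Path M.q0 v q}.Nonempty :=
    ⟨_, w, isReducedWord_of_isReduced hw, rfl, h⟩
  obtain ⟨v, -, hlen, hv⟩ := Nat.sInf_mem hne
  refine ⟨v, hv, hlen.trans_le ?_⟩
  rw [diam]
  exact le_ciSup (Set.finite_range fun q ↦
    sInf {n | ∃ v, IsReducedWord v ∧ v.length = n ∧ M.Path M.q0 v q}).bddAbove q

namespace Represents

variable {H : Subgroup (FreeGroup A)}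

theorem mk_mem (hM : M.Represents H) (h : M.Path M.q0 w M.q0) : FreeGroup.mk w ∈ H := by
  rw [← SetLike.mem_coe, ← hM.2.2]
  exact ⟨w, h, rfl⟩

variable [DecidableEq A] {g : FreeGroup A}

theorem path_toWord (hM : M.Represents H) (hg : g ∈ H) : M.Path M.q0 g.toWord M.q0 := by
  rw [← SetLike.mem_coe, ← hM.2.2] at hg
  obtain ⟨w, hw, rfl⟩ := hg
  exact hM.1.path_of_red hw (toWord_mk (L₁ := w) ▸ reduce.red)

theorem hullRadiusLE_diam [Finite M.Q] (hM : M.Represents H) : HullRadiusLE H M.diam := by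
  rintro z ⟨g, hg, h, hh, hz⟩
  have hpath := hM.path_toWord (mul_mem (inv_mem hg) hh)
  rw [toWord_eq_append_of_mem_interval hz] at hpath
  obtain ⟨q, hq, -⟩ := path_append.1 hpath
  obtain ⟨v, hv, hlen⟩ := exists_path_length_le_diam isReduced_toWord hq
  have hmem := hM.mk_mem (path_append.2 ⟨q, hv, hM.1.2.2.path_invRev hq⟩)
  refine ⟨_, mul_mem hmem (inv_mem hg), ?_⟩
  rw [← mul_mk, ← inv_mk, mk_toWord]
  exact (by simpa [mul_assoc] using norm_mk_le : FreeGroup.norm _ ≤ v.length).trans hlen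

end Represents

end Autom

end Automata

theorem FreeFactor.exists_isFreeComplement_norm_le {A : Type} [DecidableEq A]
    {H K : Subgroup (FreeGroup A)} {R S : ℕ} (hHK : FreeFactor H K) (hK : K.FG)
    (hR : HullRadiusLE H R) (hS : HullRadiusLE K S) :
    ∃ D, IsFreeComplement D H K ∧ ∀ d ∈ D, d.norm ≤ max (2 * R) (1 + 2 * S) := by
  obtain ⟨D, hD⟩ := hHK.exists_isFreeComplement
  obtain ⟨D₀, hfin, hD₀⟩ := hD.exists_finite hK
  obtain ⟨l, hl⟩ := hD₀.exists_isFreeChain hfin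
  obtain ⟨L, D₁, hD₁, hLK, hL, hnorm₁⟩ := hl.exists_embedsModulo hR
  obtain ⟨D₂, hD₂, hnorm₂⟩ := hL.exists_isFreeComplement hLK hS
  refine ⟨D₁ ∪ D₂, hD₁.trans hD₂, ?_⟩
  rintro d (hd | hd)
  exacts [le_max_of_le_left (hnorm₁ d hd), le_max_of_le_right (hnorm₂ d hd)]

/-- Proposition 4.2: if `H ≤ff K`, then `H` has a complement in `K` generated by
elements of length at most `max (2 diam_{q₀}(Γ_A(H))) (1 + 2 diam_{q₀}(Γ_A(K)))`. -/
theorem complement_in_subgroup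
    {A : Type} [DecidableEq A] (H K : Subgroup (FreeGroup A)) (hHfg : H.FG) (hKfg : K.FG)
    (MH MK : Autom A) (hMH : MH.Represents H) (hMK : MK.Represents K)
    (hfinH : Finite MH.Q) (hfinK : Finite MK.Q)
    (hff : FreeFactor H K) :
    ∃ C D : Set (FreeGroup A), IsFreeBasis C H ∧ Disjoint C D ∧ D ⊆ ↑K ∧
      IsFreeBasis (C ∪ D) K ∧
      ∀ x ∈ D, (FreeGroup.toWord x).length ≤ max (2 * MH.diam) (1 + 2 * MK.diam) := by
  obtain ⟨D, hD, hnorm⟩ := hff.exists_isFreeComplement_norm_le hKfg hMH.hullRadiusLE_diam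
    hMK.hullRadiusLE_diam
  obtain ⟨B, -, hB, -, -⟩ := hff
  obtain ⟨hBD, hdisj⟩ := hD.isFreeBasis_union hB
  exact ⟨B, D, hB, hdisj, hD.subset, hBD, hnorm⟩
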